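/- arXiv:2012.11675 — 3 statements merged into one kernel-verified Lean document; each statement's English description precedes it below -/
import Mathlib

section
/- There exists an absolute constant C with the following property. Fix Δ ∈ (−∞,−1)∪(−1,1), with the associated ζ and functions ξ, K, ϑ, ρ(·|q). Let k be the smallest odd positive integer with 2πk/(k+1) > |2π − 4ζ| if −1 < Δ < 1, and with 2πk/(k+1) > sup_{λ∈ℝ} |2ϑ(λ) − ϑ(λ+π/2) − ϑ(λ−π/2)| if Δ < −1. Then there exists N₀ (possibly depending on Δ) such that for every even N ≥ N₀, every n ≤ N/2 − Ck²·𝟙_{−1<Δ<0}, every 𝔮 with ∫_{−𝔮}^{𝔮} ρ(λ|𝔮)dλ = n/N, and every (k,𝔮)-interlaced, strictly ordered, symmetric λ ∈ ℝⁿ, the n×n matrix J with entries J_{ii} = ξ(λ_i) − (1/N)·Σ_{ℓ≠i} K(λ_i−λ_ℓ) and J_{ij} = (1/N)·K(λ_i−λ_j) for i ≠ j is invertible. -/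
open MeasureTheory Filter
open scoped Real BigOperators

noncomputable section

namespace BetheSix

/-! ### Kernels in the regime `-1 < Δ < 1` (`Δ = -cos ζ`, `ζ ∈ (0,π)`) -/

def Kml (ζ x : ℝ) : ℝ := Real.sin (2 * ζ) / (2 * π * (Real.sinh x ^ 2 + Real.sin ζ ^ 2))

def xiMl (ζ x : ℝ) : ℝ := Real.sin ζ / (2 * π * (Real.sinh x ^ 2 + Real.sin (ζ / 2) ^ 2))

/-- the momentum `p(x) = 2π ∫₀ˣ ξ`. -/
def pMl (ζ x : ℝ) : ℝ := 2 * π * ∫ t in (0 : ℝ)..x, xiMl ζ t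

/-- the phase `ϑ(x) = 2π ∫₀ˣ K`. -/
def thMl (ζ x : ℝ) : ℝ := 2 * π * ∫ t in (0 : ℝ)..x, Kml ζ t

/-- the explicit density `ρ(x) = ρ(x|∞) = 1/(2ζ cosh(πx/ζ))`. -/
def rhoInf (ζ x : ℝ) : ℝ := 1 / (2 * ζ * Real.cosh (π * x / ζ))

/-- `g` is the solution `ρ(·|q)` of the continuum Bethe equation in the regime
`-1 < Δ < 1`: `g ∈ L¹(ℝ) ∩ L^∞(ℝ)` and `g(λ) + ∫_{-q}^q K(λ-μ) g(μ) dμ = ξ(λ)`. -/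
def IsBEml (ζ q : ℝ) (g : ℝ → ℝ) : Prop :=
  Integrable g ∧ MemLp g ⊤ ∧
    ∀ l : ℝ, g l + ∫ m in (-q)..q, Kml ζ (l - m) * g m = xiMl ζ l

/-! ### Kernels in the regime `Δ < -1` (`Δ = -cosh ζ`, `ζ > 0`) -/

def Kms (ζ x : ℝ) : ℝ := Real.sinh (2 * ζ) / (2 * π * (Real.sin x ^ 2 + Real.sinh ζ ^ 2))

def xiMs (ζ x : ℝ) : ℝ := Real.sinh ζ / (2 * π * (Real.sin x ^ 2 + Real.sinh (ζ / 2) ^ 2))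

def pMs (ζ x : ℝ) : ℝ := 2 * π * ∫ t in (0 : ℝ)..x, xiMs ζ t

def thMs (ζ x : ℝ) : ℝ := 2 * π * ∫ t in (0 : ℝ)..x, Kms ζ t

/-- the explicit `π`-periodic density `ρ(x) = (1/(2ζ)) Σ_{n∈ℤ} 1/cosh(π(πn-x)/ζ)`. -/
def rhoMs (ζ x : ℝ) : ℝ := (1 / (2 * ζ)) * ∑' n : ℤ, 1 / Real.cosh (π * (π * n - x) / ζ)

/-- `g` is the continuous solution `ρ(·|q)` of the continuum Bethe equation in the
regime `Δ < -1`. -/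
def IsBEms (ζ q : ℝ) (g : ℝ → ℝ) : Prop :=
  Continuous g ∧
    ∀ l : ℝ, g l + ∫ m in (-q)..q, Kms ζ (l - m) * g m = xiMs ζ l

/-- In the regime `-1 < Δ < 1` the parameter `𝔮` ranges over `[0,∞]`.  The pair
`(S, g)` encodes the interval `[-𝔮, 𝔮]` together with the density `ρ(·|𝔮)`:
either `𝔮 = q` is finite, `S = [-q,q]` and `g = ρ(·|q)` solves the continuum Bethe
equation, or `𝔮 = ∞`, `S = ℝ` and `g = ρ(·|∞)` is the explicit density. -/
def QDomainMl (ζ : ℝ) (S : Set ℝ) (g : ℝ → ℝ) : Prop :=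
  (∃ q : ℝ, 0 ≤ q ∧ S = Set.Icc (-q) q ∧ IsBEml ζ q g) ∨
  (S = Set.univ ∧ g = rhoInf ζ)

/-! ### The logarithmic Bethe equations -/

/-- `lam` solves the logarithmic Bethe equations
`(N/2π) p(λᵢ) - (1/2π) Σⱼ ϑ(λᵢ - λⱼ) = Iᵢ` with `Iᵢ = i - (n+1)/2` (`i` is 1-based). -/
def BetheEq (p th : ℝ → ℝ) (N n : ℕ) (lam : Fin n → ℝ) : Prop :=
  ∀ i : Fin n,
    ((N : ℝ) / (2 * π)) * p (lam i) - (1 / (2 * π)) * ∑ j, th (lam i - lam j)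
      = ((i.1 : ℝ) + 1) - ((n : ℝ) + 1) / 2

/-- `λ_{n+1-i} = -λ_i` for all `i` (1-based indices). -/
def SymmetricVec {n : ℕ} (lam : Fin n → ℝ) : Prop :=
  ∀ i : Fin n, lam ⟨n - 1 - i.1, by have := i.2; omega⟩ = -lam i

/-- `λ₁ < λ₂ < ⋯ < λ_n`. -/
def StrictOrderedVec {n : ℕ} (lam : Fin n → ℝ) : Prop :=
  ∀ i j : Fin n, i < j → lam i < lam j

/-- the cumulative function `G(y) = ∫₀^y g`. Since the densities `ρ(·|q)` are
positive, `G` is strictly increasing, and the quantile `Λ(x|q)` (with the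
conventions `Λ(x|q) = ±∞` outside the range) satisfies, for every `y ∈ ℝ`:
`Λ(x|q) ≤ y ↔ (x-(n+1)/2)/N ≤ G(y)` and `y ≤ Λ(x|q) ↔ G(y) ≤ (x-(n+1)/2)/N`. -/
def GG (g : ℝ → ℝ) (y : ℝ) : ℝ := ∫ t in (0 : ℝ)..y, g t

/-- `lam` is `(k,q)`-interlaced with respect to the density `g = ρ(·|q)`:
`Λ(i - k/2 | q) ≤ λ_i ≤ Λ(i + k/2 | q)` for all `i` (1-based), expressed through
the cumulative function `G` to accommodate the conventions `Λ = ±∞`. -/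
def Interlaced (N n k : ℕ) (g : ℝ → ℝ) (lam : Fin n → ℝ) : Prop :=
  ∀ i : Fin n,
    (((i.1 : ℝ) + 1) - (k : ℝ) / 2 - ((n : ℝ) + 1) / 2) / N ≤ GG g (lam i) ∧
    GG g (lam i) ≤ (((i.1 : ℝ) + 1) + (k : ℝ) / 2 - ((n : ℝ) + 1) / 2) / N

end BetheSix

namespace BetheSix

/-- the Jacobian `dT` of the map encoding the logarithmic Bethe equations:
`J_{ii} = ξ(λᵢ) - (1/N) Σ_{ℓ≠i} K(λᵢ-λ_ℓ)` and `J_{ij} = (1/N) K(λᵢ-λⱼ)` for `i ≠ j`. -/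
def Jac (xi K : ℝ → ℝ) (N n : ℕ) (lam : Fin n → ℝ) : Matrix (Fin n) (Fin n) ℝ :=
  Matrix.of fun i j =>
    if i = j then xi (lam i) - (1 / (N : ℝ)) * ∑ l ∈ Finset.univ.erase i, K (lam i - lam l)
    else (1 / (N : ℝ)) * K (lam i - lam j)

/-- `φ(λ) = 2ϑ(λ) - ϑ(λ+π/2) - ϑ(λ-π/2)` in the regime `Δ < -1`. -/
def phiMs (ζ l : ℝ) : ℝ := 2 * thMs ζ l - thMs ζ (l + π / 2) - thMs ζ (l - π / 2)

section Helpers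
open scoped FourierTransform
variable {α β : ℝ}



/-- kernel -/
def Tk (α β x : ℝ) : ℝ :=
  1 / (2 * β) * (Real.sin (π * α / β) / (Real.cosh (π * x / β) + Real.cos (π * α / β)))

/-- multiplier -/
def Mk (α β w : ℝ) : ℝ := if w = 0 then α / β else Real.sinh (α * w) / Real.sinh (β * w)

lemma cot_partial (z : ℂ) (hz : z ∈ Complex.integerComplement) :
    Tendsto (fun n : ℕ => ∑ j ∈ Finset.range n, (1 / (z + j) + 1 / (z - (j + 1)))) atTop
      (nhds (π * Complex.cot (π * z))) := by
  have h := tendsto_logDeriv_euler_cot_sub hz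
  have h2 : Tendsto (fun n : ℕ => 1 / (z + n)) atTop (nhds 0) := by
    have : Tendsto (fun n : ℕ => ‖z + n‖) atTop atTop := by
      have h3 : Tendsto (fun n : ℕ => (n : ℝ) - ‖z‖) atTop atTop :=
        tendsto_atTop_add_const_right _ _ tendsto_natCast_atTop_atTop
      refine tendsto_atTop_mono (fun n => ?_) h3
      have := norm_sub_norm_le (n : ℂ) (-z)
      simp only [norm_neg, sub_neg_eq_add, Complex.norm_natCast] at this
      rwa [add_comm z]
    have h4 := (tendsto_inv_atTop_zero).comp this
    rw [tendsto_zero_iff_norm_tendsto_zero]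
    simpa [Function.comp_def] using h4
  have h5 := (h.add_const (1 / z)).sub h2
  simp only [sub_add_cancel, sub_zero] at h5
  refine h5.congr (fun n => ?_)
  induction n with
  | zero => simp
  | succ n ih =>
    rw [Finset.sum_range_succ, Finset.sum_range_succ, ← ih, cotTerm]
    push_cast
    ring

lemma cot_add_cot (a x : ℝ) (h : Complex.sin (a + x * Complex.I) ≠ 0)
    (h' : Complex.sin (a - x * Complex.I) ≠ 0) :
    Complex.cot (a + x * Complex.I) + Complex.cot (a - x * Complex.I)
      = ((2 * (Real.sin (2 * a) / (Real.cosh (2 * x) - Real.cos (2 * a))) : ℝ) : ℂ) := by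
  have e1 : Complex.sin (a + x * Complex.I) * Complex.sin (a - x * Complex.I)
      = (((Real.cosh (2 * x) - Real.cos (2 * a)) / 2 : ℝ) : ℂ) := by
    have := Complex.cos_sub_cos (2 * x * Complex.I) (2 * a)
    have e2 : (2 * x * Complex.I + 2 * a) / 2 = a + x * Complex.I := by ring
    have e3 : (2 * x * Complex.I - 2 * a) / 2 = -(a - x * Complex.I) := by ring
    rw [e2, e3, Complex.sin_neg, Complex.cos_mul_I] at this
    push_cast
    rw [this]; ring
  have e4 : Complex.cot (a + x * Complex.I) + Complex.cot (a - x * Complex.I)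
     = Complex.sin (2 * a) / (Complex.sin (a + x * Complex.I) * Complex.sin (a - x * Complex.I)) := by
    have := Complex.sin_add (a + x * Complex.I) (a - x * Complex.I)
    have e5 : (a + x * Complex.I) + (a - x * Complex.I) = 2 * (a : ℂ) := by ring
    rw [e5] at this
    rw [this, Complex.cot, Complex.cot]
    field_simp
    ring
  rw [e4, e1]
  push_cast
  rw [div_div_eq_mul_div]
  ring

lemma sin_ne (a x : ℝ) (ha : 0 < a) (ha' : a < π) : Complex.sin (a + x * Complex.I) ≠ 0 := by
  rw [Complex.sin_ne_zero_iff]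
  intro k hk
  have := congrArg Complex.re hk
  simp at this
  rw [this] at ha ha'
  have h1 : (0:ℝ) < k := by
    by_contra h
    push Not at h
    nlinarith [Real.pi_pos]
  have h2 : (k:ℝ) < 1 := by
    by_contra h
    push Not at h
    nlinarith [Real.pi_pos]
  have h3 : (0:ℤ) < k := by exact_mod_cast h1
  have h4 : k < (1:ℤ) := by exact_mod_cast h2
  omega

lemma mem_compl (a x : ℝ) (ha : 0 < a) (ha' : a < 1) :
    (a + x * Complex.I : ℂ) ∈ Complex.integerComplement := by
  rw [Complex.mem_integerComplement_iff]
  rintro ⟨k, hk⟩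
  have := congrArg Complex.re hk
  simp at this
  have h3 : (0:ℤ) < k := by rw [← this] at ha; exact_mod_cast ha
  have h4 : k < (1:ℤ) := by rw [← this] at ha'; exact_mod_cast ha'
  omega


/-- Series evaluation. -/
lemma series_tendsto (hα : 0 < α) (hαβ : α < β) (x : ℝ) :
    Tendsto (fun n : ℕ => ∑ j ∈ Finset.range n,
      ((1 / (((2 * j + 1) * β - α : ℝ) - x * Complex.I) - 1 / (((2 * j + 1) * β + α : ℝ) - x * Complex.I))
       + (1 / (((2 * j + 1) * β - α : ℝ) + x * Complex.I) - 1 / (((2 * j + 1) * β + α : ℝ) + x * Complex.I))))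
      atTop (nhds ((2 * π * Tk α β x : ℝ) : ℂ)) := by
  have hβ : 0 < β := hα.trans hαβ
  have hβc : (β : ℂ) ≠ 0 := by exact_mod_cast hβ.ne'
  set a : ℝ := (β - α) / (2 * β) with ha
  have ha0 : 0 < a := by apply div_pos <;> linarith
  have ha1 : a < 1 := by rw [ha, div_lt_one (by linarith)]; linarith
  set y : ℝ := x / (2 * β) with hy
  have t1 := cot_partial _ (mem_compl a y ha0 ha1)
  have t2 := cot_partial _ (mem_compl a (-y) ha0 ha1)
  have t3 := (t1.add t2).const_mul ((1 / (2 * β) : ℂ))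
  have e : (1 / (2 * β) : ℂ) * (π * Complex.cot (π * (a + y * Complex.I)) + π * Complex.cot (π * (a + (-y : ℝ) * Complex.I))) = ((2 * π * Tk α β x : ℝ) : ℂ) := by
    have p1 : (π * (a + y * Complex.I) : ℂ) = ((π * a : ℝ) : ℂ) + ((π * y : ℝ) : ℂ) * Complex.I := by
      push_cast; ring
    have p2 : (π * (a + (-y : ℝ) * Complex.I) : ℂ) = ((π * a : ℝ) : ℂ) - ((π * y : ℝ) : ℂ) * Complex.I := by
      push_cast; ring
    have hpa : 0 < π * a := by positivity
    have hpa' : π * a < π := by nlinarith [Real.pi_pos]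
    rw [p1, p2, ← mul_add, cot_add_cot]
    · have q1 : 2 * (π * a) = π - π * α / β := by
        rw [ha]; field_simp
      have q2 : 2 * (π * y) = π * x / β := by rw [hy]; field_simp
      rw [q1, q2, Real.sin_pi_sub, Real.cos_pi_sub, Tk]
      push_cast
      field_simp
      ring
    · exact sin_ne _ _ hpa hpa'
    · have := sin_ne (π * a) (-(π * y)) hpa hpa'
      convert this using 2
      push_cast; ring
  rw [e] at t3
  refine t3.congr (fun n => ?_)
  rw [← Finset.sum_add_distrib, Finset.mul_sum]
  refine Finset.sum_congr rfl (fun j _ => ?_)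
  have r1 : ((((2 * j + 1) * β - α : ℝ)) + x * Complex.I : ℂ) = (2 * β) * ((a : ℂ) + y * Complex.I + j) := by
    rw [ha, hy]; push_cast; field_simp; ring
  have r2 : ((((2 * j + 1) * β - α : ℝ)) - x * Complex.I : ℂ) = (2 * β) * ((a : ℂ) + (-y : ℝ) * Complex.I + j) := by
    rw [ha, hy]; push_cast; field_simp; ring
  have r3 : ((((2 * j + 1) * β + α : ℝ)) + x * Complex.I : ℂ) = (2 * β) * (-((a : ℂ) + (-y : ℝ) * Complex.I - (j + 1))) := by
    rw [ha, hy]; push_cast; field_simp; ring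
  have r4 : ((((2 * j + 1) * β + α : ℝ)) - x * Complex.I : ℂ) = (2 * β) * (-((a : ℂ) + y * Complex.I - (j + 1))) := by
    rw [ha, hy]; push_cast; field_simp; ring
  rw [r1, r2, r3, r4]
  simp only [one_div, mul_inv, inv_neg]
  ring




lemma integrable_exp_neg_abs' {c : ℝ} (hc : 0 < c) : Integrable (fun x : ℝ => Real.exp (-c * |x|)) := by
  rw [← integrableOn_univ, ← Set.Iic_union_Ioi (a := (0:ℝ))]
  refine IntegrableOn.union ?_ ?_
  · refine (integrableOn_exp_mul_Iic hc 0).congr_fun (fun x hx => ?_) measurableSet_Iic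
    simp only [Set.mem_Iic] at hx
    simp [abs_of_nonpos hx]
  · refine (integrableOn_exp_mul_Ioi (a := -c) (by linarith) 0).congr_fun (fun x hx => ?_) measurableSet_Ioi
    simp only [Set.mem_Ioi] at hx
    simp [abs_of_pos hx]

lemma Mk_neg (w : ℝ) : Mk α β (-w) = Mk α β w := by
  unfold Mk
  by_cases h : w = 0
  · simp [h]
  · simp [h, Real.sinh_neg, neg_div_neg_eq]

lemma Mk_pos (hα : 0 < α) (hαβ : α < β) (w : ℝ) : 0 < Mk α β w := by
  have hβ : 0 < β := hα.trans hαβ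
  have key : ∀ w : ℝ, 0 < w → 0 < Mk α β w := by
    intro w hw
    unfold Mk
    rw [if_neg hw.ne']
    exact div_pos (Real.sinh_pos_iff.2 (by positivity)) (Real.sinh_pos_iff.2 (by positivity))
  rcases lt_trichotomy w 0 with h | h | h
  · rw [← Mk_neg]; exact key _ (by linarith)
  · subst h; simp only [Mk, if_true]; positivity
  · exact key _ h

lemma Mk_le (hα : 0 < α) (hαβ : α < β) (w : ℝ) : Mk α β w ≤ Real.exp (-(β - α) * |w|) := by
  have hβ : 0 < β := hα.trans hαβ
  have key : ∀ w : ℝ, 0 < w → Mk α β w ≤ Real.exp (-(β - α) * |w|) := by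
    intro w hw
    unfold Mk
    rw [if_neg hw.ne', abs_of_pos hw, div_le_iff₀ (Real.sinh_pos_iff.2 (by positivity)),
      Real.sinh_eq, Real.sinh_eq, mul_div_assoc', mul_sub, ← Real.exp_add, ← Real.exp_add]
    have e1 : -(β - α) * w + β * w = α * w := by ring
    have e2 : -(β - α) * w + -(β * w) = -(2 * β * w) + α * w := by ring
    rw [e1, e2]
    have : Real.exp (-(2 * β * w) + α * w) ≤ Real.exp (-(α * w)) := by
      apply Real.exp_le_exp.2; nlinarith
    linarith
  rcases lt_trichotomy w 0 with h | h | h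
  · rw [← Mk_neg, ← abs_neg]; exact key _ (by linarith)
  · subst h; simp only [Mk, if_true, abs_zero, mul_zero, Real.exp_zero]
    rw [div_le_one hβ]; exact hαβ.le
  · exact key _ h

lemma sinh_slope (a : ℝ) : Tendsto (fun w : ℝ => Real.sinh (a * w) / w) (nhdsWithin 0 {0}ᶜ) (nhds a) := by
  have h : HasDerivAt (fun w : ℝ => Real.sinh (a * w)) a 0 := by
    have := (Real.hasDerivAt_sinh (a * 0)).comp (0:ℝ) ((hasDerivAt_id (0:ℝ)).const_mul a)
    simpa [Function.comp_def] using this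
  have h2 := hasDerivAt_iff_tendsto_slope.1 h
  refine h2.congr' ?_
  filter_upwards [self_mem_nhdsWithin] with w hw
  simp [slope_def_field]

lemma Mk_continuous (hα : 0 < α) (hαβ : α < β) : Continuous (Mk α β) := by
  have hβ : 0 < β := hα.trans hαβ
  rw [continuous_iff_continuousAt]
  intro w
  by_cases h : w = 0
  · subst h
    rw [continuousAt_iff_punctured_nhds]
    have := (sinh_slope α).div (sinh_slope β) hβ.ne'
    have e : Mk α β 0 = α / β := by simp [Mk]
    rw [e]
    refine this.congr' ?_
    filter_upwards [self_mem_nhdsWithin] with w hw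
    have hw' : w ≠ 0 := hw
    simp only [Mk, if_neg hw', Pi.div_apply]
    rw [div_div_div_cancel_right₀ hw']
  · have hs : Real.sinh (β * w) ≠ 0 := by
      rw [Ne, Real.sinh_eq_zero]; positivity
    have : ContinuousAt (fun w => Real.sinh (α * w) / Real.sinh (β * w)) w := by
      refine ContinuousAt.div (f := fun w => Real.sinh (α * w)) (g := fun w => Real.sinh (β * w)) ?_ ?_ hs
      · exact (Real.continuous_sinh.comp (continuous_const.mul continuous_id)).continuousAt
      · exact (Real.continuous_sinh.comp (continuous_const.mul continuous_id)).continuousAt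
    refine this.congr ?_
    filter_upwards [isOpen_ne.mem_nhds h] with u hu
    have hu' : u ≠ 0 := hu
    simp [Mk, hu']

lemma Mk_integrable (hα : 0 < α) (hαβ : α < β) : Integrable (Mk α β) := by
  refine (integrable_exp_neg_abs' (sub_pos.2 hαβ)).mono' (Mk_continuous hα hαβ).aestronglyMeasurable ?_
  refine ae_of_all _ (fun w => ?_)
  rw [Real.norm_of_nonneg (Mk_pos hα hαβ w).le]
  exact Mk_le hα hαβ w

lemma Mk_integrable' (hα : 0 < α) (hαβ : α < β) : Integrable (fun v => Mk α β (2 * π * v)) :=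
  (Mk_integrable hα hαβ).comp_mul_left' (by positivity)

/-- denominators -/
lemma Tk_den (hα : 0 < α) (hαβ : α < β) (x : ℝ) :
    (1 + Real.cos (π * α / β)) / 2 * Real.cosh (π * x / β) ≤ Real.cosh (π * x / β) + Real.cos (π * α / β) := by
  have h1 := Real.one_le_cosh (π * x / β)
  have h2 := Real.cos_le_one (π * α / β)
  have h3 := Real.neg_one_le_cos (π * α / β)
  nlinarith

lemma Tk_ang (hα : 0 < α) (hαβ : α < β) : 0 < π * α / β ∧ π * α / β < π := by
  have hβ : 0 < β := hα.trans hαβ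
  refine ⟨by positivity, ?_⟩
  rw [div_lt_iff₀ hβ]; nlinarith [Real.pi_pos]

lemma Tk_cos (hα : 0 < α) (hαβ : α < β) : 0 < 1 + Real.cos (π * α / β) := by
  have := Real.cos_lt_cos_of_nonneg_of_le_pi (Tk_ang hα hαβ).1.le le_rfl (Tk_ang hα hαβ).2
  rw [Real.cos_pi] at this
  linarith

lemma Tk_den_pos (hα : 0 < α) (hαβ : α < β) (x : ℝ) :
    0 < Real.cosh (π * x / β) + Real.cos (π * α / β) :=
  lt_of_lt_of_le (mul_pos (by linarith [Tk_cos hα hαβ]) (Real.cosh_pos _)) (Tk_den hα hαβ x)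

lemma Tk_pos (hα : 0 < α) (hαβ : α < β) (x : ℝ) : 0 < Tk α β x := by
  have hβ : 0 < β := hα.trans hαβ
  have := Real.sin_pos_of_pos_of_lt_pi (Tk_ang hα hαβ).1 (Tk_ang hα hαβ).2
  have := Tk_den_pos hα hαβ x
  unfold Tk
  positivity

lemma Tk_continuous (hα : 0 < α) (hαβ : α < β) : Continuous (Tk α β) := by
  unfold Tk
  refine continuous_const.mul (continuous_const.div ?_ (fun x => (Tk_den_pos hα hαβ x).ne'))
  fun_prop

lemma Tk_bound (hα : 0 < α) (hαβ : α < β) : ∃ C, 0 < C ∧ ∀ x, Tk α β x ≤ C * Real.exp (-(π / β) * |x|) := by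
  have hβ : 0 < β := hα.trans hαβ
  have hs := Real.sin_pos_of_pos_of_lt_pi (Tk_ang hα hαβ).1 (Tk_ang hα hαβ).2
  have hc := Tk_cos hα hαβ
  refine ⟨1 / (2 * β) * (Real.sin (π * α / β) * (4 / (1 + Real.cos (π * α / β)))), by positivity, fun x => ?_⟩
  unfold Tk
  rw [mul_assoc]
  apply mul_le_mul_of_nonneg_left _ (by positivity)
  rw [div_eq_mul_inv, mul_assoc]
  apply mul_le_mul_of_nonneg_left _ hs.le
  rw [inv_le_comm₀ (Tk_den_pos hα hαβ x) (by positivity), mul_inv, ← Real.exp_neg, inv_div]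
  refine le_trans ?_ (Tk_den hα hαβ x)
  have : Real.exp (-(-(π / β) * |x|)) ≤ 2 * Real.cosh (π * x / β) := by
    rw [← Real.cosh_abs, Real.cosh_eq]
    have e : |π * x / β| = -(-(π / β) * |x|) := by
      rw [abs_div, abs_mul, abs_of_pos Real.pi_pos, abs_of_pos hβ]; ring
    rw [e]
    have := Real.exp_pos (-(-(-(π / β) * |x|)))
    linarith
  calc _ ≤ (1 + Real.cos (π * α / β)) / 4 * (2 * Real.cosh (π * x / β)) := by
        apply mul_le_mul_of_nonneg_left this (by positivity)
    _ = _ := by ring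

lemma Tk_integrable (hα : 0 < α) (hαβ : α < β) : Integrable (Tk α β) := by
  have hβ : 0 < β := hα.trans hαβ
  obtain ⟨C, hC, h⟩ := Tk_bound hα hαβ
  refine ((integrable_exp_neg_abs' (c := π / β) (by positivity)).const_mul C).mono'
    (Tk_continuous hα hαβ).aestronglyMeasurable (ae_of_all _ (fun w => ?_))
  rw [Real.norm_of_nonneg (Tk_pos hα hαβ w).le]
  exact h w

lemma Tk_neg (x : ℝ) : Tk α β (-x) = Tk α β x := by
  unfold Tk
  rw [mul_neg, neg_div, Real.cosh_neg]

lemma Mk_series (hα : 0 < α) (hαβ : α < β) {w : ℝ} (hw : 0 < w) :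
    HasSum (fun j : ℕ => Real.exp (-((2 * j + 1) * β - α) * w) - Real.exp (-((2 * j + 1) * β + α) * w))
      (Mk α β w) := by
  have hβ : 0 < β := hα.trans hαβ
  have h1 : Real.exp (-(2 * β) * w) < 1 := by
    rw [Real.exp_lt_one_iff]; nlinarith [mul_pos hβ hw]
  have h := (hasSum_geometric_of_lt_one (Real.exp_pos _).le h1).mul_left
    (Real.exp (-(β - α) * w) - Real.exp (-(β + α) * w))
  have e : (Real.exp (-(β - α) * w) - Real.exp (-(β + α) * w)) * (1 - Real.exp (-(2 * β) * w))⁻¹ = Mk α β w := by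
    unfold Mk
    rw [if_neg hw.ne']
    have hs : 0 < Real.sinh (β * w) := Real.sinh_pos_iff.2 (by positivity)
    rw [← div_eq_mul_inv, div_eq_div_iff (by linarith) hs.ne', Real.sinh_eq, Real.sinh_eq]
    have a1 : Real.exp (-(β - α) * w) = Real.exp (α * w) * Real.exp (-(β * w)) := by
      rw [← Real.exp_add]; ring_nf
    have a2 : Real.exp (-(β + α) * w) = Real.exp (-(α * w)) * Real.exp (-(β * w)) := by
      rw [← Real.exp_add]; ring_nf
    have a3 : Real.exp (-(2 * β) * w) = Real.exp (-(β * w)) * Real.exp (-(β * w)) := by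
      rw [← Real.exp_add]; ring_nf
    have a4 : Real.exp (β * w) * Real.exp (-(β * w)) = 1 := by rw [← Real.exp_add]; simp
    rw [a1, a2, a3]
    linear_combination (Real.exp (α * w) - Real.exp (-(α * w))) / 2 * a4
  rw [e] at h
  refine h.congr_fun (fun j => ?_) |> id
  rw [← Real.exp_nat_mul, sub_mul, ← Real.exp_add, ← Real.exp_add]
  congr 2 <;> ring




lemma half_int {c : ℝ} (hc : 0 < c) (x : ℝ) :
    IntegrableOn (fun w : ℝ => Complex.exp (-(c - x * Complex.I) * w)) (Set.Ioi 0) ∧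
    ∫ w in Set.Ioi (0:ℝ), Complex.exp (-(c - x * Complex.I) * w) = 1 / (c - x * Complex.I) := by
  have hre : (-(c - x * Complex.I) : ℂ).re < 0 := by simp [hc]
  refine ⟨integrableOn_exp_mul_complex_Ioi hre 0, ?_⟩
  rw [integral_exp_mul_complex_Ioi hre 0]
  simp [neg_div_neg_eq]
  rw [show ((x:ℂ)*Complex.I - c) = -(c - x*Complex.I) by ring, neg_div_neg_eq, one_div]

lemma half_real {c : ℝ} (hc : 0 < c) :
    IntegrableOn (fun w : ℝ => Real.exp (-c * w)) (Set.Ioi 0) ∧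
    ∫ w in Set.Ioi (0:ℝ), Real.exp (-c * w) = 1 / c := by
  refine ⟨integrableOn_exp_mul_Ioi (by linarith) 0, ?_⟩
  rw [integral_exp_mul_Ioi (by linarith) 0]
  simp [neg_div_neg_eq]

lemma half_sum (hα : 0 < α) (hαβ : α < β) (x : ℝ) :
    HasSum (fun j : ℕ => 1 / (((2 * j + 1) * β - α : ℝ) - x * Complex.I : ℂ) - 1 / (((2 * j + 1) * β + α : ℝ) - x * Complex.I : ℂ))
      (∫ w in Set.Ioi (0:ℝ), (Mk α β w : ℂ) * Complex.exp (x * Complex.I * w)) := by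
  have hβ : 0 < β := hα.trans hαβ
  have pa : ∀ j : ℕ, 0 < (2 * (j:ℝ) + 1) * β - α := by
    intro j; have : (0:ℝ) ≤ j := by positivity
    nlinarith [mul_nonneg this hβ.le]
  have pb : ∀ j : ℕ, 0 < (2 * (j:ℝ) + 1) * β + α := by
    intro j; positivity
  set F : ℕ → ℝ → ℂ := fun j w => Complex.exp (-((((2 * j + 1) * β - α : ℝ)) - x * Complex.I) * w)
    - Complex.exp (-((((2 * j + 1) * β + α : ℝ)) - x * Complex.I) * w) with hF
  have hFe : ∀ j w, F j w = ((Real.exp (-((2 * j + 1) * β - α) * w) - Real.exp (-((2 * j + 1) * β + α) * w) : ℝ) : ℂ)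
      * Complex.exp (x * Complex.I * w) := by
    intro j w
    simp only [hF]
    push_cast
    rw [sub_mul, ← Complex.exp_add, ← Complex.exp_add]
    congr 2 <;> ring
  have hnorm : ∀ j, ∀ w ∈ Set.Ioi (0:ℝ), ‖F j w‖ = Real.exp (-((2 * j + 1) * β - α) * w) - Real.exp (-((2 * j + 1) * β + α) * w) := by
    intro j w hw
    have hw' : 0 < w := hw
    rw [hFe, norm_mul, Complex.norm_real]
    have : ‖Complex.exp (x * Complex.I * w)‖ = 1 := by
      rw [show (x * Complex.I * w : ℂ) = ((x * w : ℝ) : ℂ) * Complex.I by push_cast; ring]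
      exact Complex.norm_exp_ofReal_mul_I _
    rw [this, mul_one, Real.norm_of_nonneg]
    rw [sub_nonneg]
    apply Real.exp_le_exp.2
    nlinarith
  have hint : ∀ j, Integrable (F j) (volume.restrict (Set.Ioi 0)) := fun j =>
    (half_int (pa j) x).1.sub (half_int (pb j) x).1
  have hnint : ∀ j, ∫ w in Set.Ioi (0:ℝ), ‖F j w‖ = 1 / ((2 * j + 1) * β - α) - 1 / ((2 * j + 1) * β + α) := by
    intro j
    rw [setIntegral_congr_fun measurableSet_Ioi (hnorm j), integral_sub (half_real (pa j)).1 (half_real (pb j)).1,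
      (half_real (pa j)).2, (half_real (pb j)).2]
  have hs : Summable (fun j => ∫ w in Set.Ioi (0:ℝ), ‖F j w‖) := by
    have h0 : Summable (fun j : ℕ => 2 * α / ((β - α) * β) * (1 / ((j:ℝ) + 1) ^ 2)) := by
      apply Summable.mul_left
      have := (summable_nat_add_iff 1).2 (Real.summable_one_div_nat_pow.2 (one_lt_two))
      simpa using this
    refine Summable.of_nonneg_of_le (fun j => integral_nonneg (fun _ => norm_nonneg _)) (fun j => ?_) h0
    rw [hnint]
    have hj : (0:ℝ) ≤ j := by positivity
    have hba : 0 < β - α := by linarith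
    rw [div_sub_div _ _ (pa j).ne' (pb j).ne', div_mul_div_comm]
    have e : (1 * ((2 * (j:ℝ) + 1) * β + α) - ((2 * j + 1) * β - α) * 1) = 2 * α * 1 := by ring
    rw [e]
    apply div_le_div_of_nonneg_left (by positivity) (by positivity)
    calc (β - α) * β * (j + 1) ^ 2 = ((j + 1) * (β - α)) * ((j + 1) * β) := by ring
      _ ≤ _ := by
        apply mul_le_mul _ _ (by positivity) (pa j).le
        · nlinarith
        · nlinarith
  have key := hasSum_integral_of_summable_integral_norm hint hs
  have e1 : ∀ j, ∫ w in Set.Ioi (0:ℝ), F j w = 1 / (((2 * j + 1) * β - α : ℝ) - x * Complex.I : ℂ) - 1 / (((2 * j + 1) * β + α : ℝ) - x * Complex.I : ℂ) := by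
    intro j
    simp only [hF]
    rw [integral_sub (half_int (pa j) x).1 (half_int (pb j) x).1, (half_int (pa j) x).2, (half_int (pb j) x).2]
  have e2 : ∫ w in Set.Ioi (0:ℝ), ∑' j, F j w = ∫ w in Set.Ioi (0:ℝ), (Mk α β w : ℂ) * Complex.exp (x * Complex.I * w) := by
    apply setIntegral_congr_fun measurableSet_Ioi
    intro w hw
    have h1 := Mk_series hα hαβ (w := w) hw
    have h2 : HasSum (fun j => F j w) ((Mk α β w : ℂ) * Complex.exp (x * Complex.I * w)) := by
      simp_rw [hFe]
      exact (Complex.hasSum_ofReal.2 h1).mul_right _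
    exact h2.tsum_eq
  rw [← e2]
  simpa only [e1] using key

lemma full_int (hα : 0 < α) (hαβ : α < β) (x : ℝ) :
    ∫ w : ℝ, (Mk α β w : ℂ) * Complex.exp (x * Complex.I * w) = ((2 * π * Tk α β x : ℝ) : ℂ) := by
  have hI : ∀ x : ℝ, Integrable (fun w : ℝ => (Mk α β w : ℂ) * Complex.exp (x * Complex.I * w)) := by
    intro x
    refine (Mk_integrable hα hαβ).ofReal.mul_bdd (c := 1) ?_ ?_
    · exact (by fun_prop : Continuous fun w : ℝ => Complex.exp (x * Complex.I * w)).aestronglyMeasurable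
    · refine ae_of_all _ (fun w => ?_)
      rw [show (x * Complex.I * w : ℂ) = ((x * w : ℝ) : ℂ) * Complex.I by push_cast; ring]
      exact (Complex.norm_exp_ofReal_mul_I _).le
  rw [← intervalIntegral.integral_Iic_add_Ioi (b := 0) (hI x).integrableOn (hI x).integrableOn]
  have e : ∫ w in Set.Iic (0:ℝ), (Mk α β w : ℂ) * Complex.exp (x * Complex.I * w)
     = ∫ w in Set.Ioi (0:ℝ), (Mk α β w : ℂ) * Complex.exp (((-x : ℝ) : ℂ) * Complex.I * w) := by
    have := integral_comp_neg_Iic (0:ℝ) (fun w : ℝ => (Mk α β w : ℂ) * Complex.exp (((-x : ℝ) : ℂ) * Complex.I * w))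
    rw [neg_zero] at this
    rw [← this]
    congr 1; ext w
    rw [Mk_neg]; push_cast; ring_nf
  rw [e]
  have s1 := (half_sum hα hαβ x).add (half_sum hα hαβ (-x))
  have s2 := s1.tendsto_sum_nat
  have s3 := series_tendsto hα hαβ x
  rw [add_comm]
  refine tendsto_nhds_unique s2 (s3.congr (fun n => ?_))
  refine Finset.sum_congr rfl (fun j _ => ?_)
  push_cast
  simp only [neg_mul, sub_neg_eq_add]

lemma Tk_inv (hα : 0 < α) (hαβ : α < β) (x : ℝ) :
    𝓕⁻ (fun v : ℝ => (Mk α β (2 * π * v) : ℂ)) x = (Tk α β x : ℂ) := by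
  rw [Real.fourierInv_eq']
  have h := full_int hα hαβ x
  have h2 := Measure.integral_comp_mul_left (fun w : ℝ => (Mk α β w : ℂ) * Complex.exp (x * Complex.I * w)) (2 * π)
  rw [h] at h2
  have : ∀ v : ℝ, Complex.exp (↑(2 * π * inner ℝ v x) * Complex.I) • (Mk α β (2 * π * v) : ℂ)
    = (Mk α β (2 * π * v) : ℂ) * Complex.exp (x * Complex.I * (2 * π * v : ℝ)) := by
    intro v
    rw [smul_eq_mul, mul_comm]
    congr 2
    simp
    ring
  simp_rw [this]
  rw [h2, abs_of_pos (by positivity), Complex.real_smul]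
  push_cast
  have : (π : ℂ) ≠ 0 := by exact_mod_cast Real.pi_ne_zero
  field_simp

lemma Mc_continuous (hα : 0 < α) (hαβ : α < β) : Continuous (fun v : ℝ => (Mk α β (2 * π * v) : ℂ)) := by
  have := Mk_continuous hα hαβ
  fun_prop

lemma Tk_fourier (hα : 0 < α) (hαβ : α < β) :
    𝓕 (fun x : ℝ => (Tk α β x : ℂ)) = fun v : ℝ => (Mk α β (2 * π * v) : ℂ) := by
  have e : 𝓕⁻ (fun v : ℝ => (Mk α β (2 * π * v) : ℂ)) = (fun x : ℝ => (Tk α β x : ℂ)) :=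
    funext (Tk_inv hα hαβ)
  rw [← e]
  apply Continuous.fourier_fourierInv_eq (Mc_continuous hα hαβ) (Mk_integrable' hα hαβ).ofReal
  have e3 : 𝓕 (fun v : ℝ => (Mk α β (2 * π * v) : ℂ)) = (fun x : ℝ => (Tk α β x : ℂ)) := by
    rw [← e, Real.fourierInv_eq_fourier_comp_neg]
    congr 1; funext v
    rw [mul_neg, Mk_neg]
  rw [e3]
  exact (Tk_integrable hα hαβ).ofReal

lemma Tk_integral (hα : 0 < α) (hαβ : α < β) : ∫ x, Tk α β x = α / β := by
  have h := congrFun (Tk_fourier hα hαβ) 0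
  rw [Real.fourier_real_eq_integral_exp_smul] at h
  simp [Mk] at h
  rw [integral_complex_ofReal] at h
  exact_mod_cast h


lemma jac_isUnit {xi K : ℝ → ℝ} {N n : ℕ} {lam : Fin n → ℝ}
    (psd : ∀ c : Fin n → ℝ, 0 ≤ ∑ i, ∑ j, c i * c j * K (lam i - lam j))
    (hD : ∀ i, (1 / (N:ℝ)) * ∑ l, K (lam i - lam l) < xi (lam i)) :
    IsUnit (Jac xi K N n lam) := by
  rw [← Matrix.mulVec_injective_iff_isUnit]
  rw [injective_iff_map_eq_zero' (Matrix.mulVecLin (Jac xi K N n lam)) |>.trans Iff.rfl |> fun h => (show Function.Injective (Jac xi K N n lam).mulVec ↔ _ from h)]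
  intro c
  refine ⟨fun hc => ?_, fun h => by simp [h]⟩
  have hJ : ∀ i, (∑ j, Jac xi K N n lam i j * c j) = 
      (xi (lam i) - (1 / (N:ℝ)) * ∑ l, K (lam i - lam l)) * c i + (1 / (N:ℝ)) * ∑ j, c j * K (lam i - lam j) := by
    intro i
    rw [← Finset.add_sum_erase _ _ (Finset.mem_univ i), ← Finset.add_sum_erase _ (fun l => K (lam i - lam l)) (Finset.mem_univ i),
      ← Finset.add_sum_erase _ (fun j => c j * K (lam i - lam j)) (Finset.mem_univ i)]
    have : ∑ j ∈ Finset.univ.erase i, Jac xi K N n lam i j * c j = (1 / (N:ℝ)) * ∑ j ∈ Finset.univ.erase i, c j * K (lam i - lam j) := by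
      rw [Finset.mul_sum]
      refine Finset.sum_congr rfl (fun j hj => ?_)
      have : i ≠ j := fun h => (Finset.mem_erase.1 hj).1 h.symm
      simp [Jac, this]; ring
    rw [this]
    simp [Jac]; ring
  have h0 : ∀ i, ∑ j, Jac xi K N n lam i j * c j = 0 := fun i => congrFun hc i
  have h1 : ∑ i, c i * ∑ j, Jac xi K N n lam i j * c j = 0 := by simp [h0]
  simp_rw [hJ] at h1
  have h2 : ∑ i, (xi (lam i) - (1 / (N:ℝ)) * ∑ l, K (lam i - lam l)) * c i ^ 2 + (1 / (N:ℝ)) * ∑ i, ∑ j, c i * c j * K (lam i - lam j) = 0 := by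
    rw [← h1, Finset.mul_sum, ← Finset.sum_add_distrib]
    refine Finset.sum_congr rfl (fun i _ => ?_)
    rw [mul_add]
    congr 1
    · ring
    · rw [Finset.mul_sum, Finset.mul_sum, Finset.mul_sum]
      refine Finset.sum_congr rfl (fun j _ => ?_); ring
  have h3 : 0 ≤ (1 / (N:ℝ)) * ∑ i, ∑ j, c i * c j * K (lam i - lam j) := mul_nonneg (by positivity) (psd c)
  have h4 : ∀ i ∈ Finset.univ, 0 ≤ (xi (lam i) - (1 / (N:ℝ)) * ∑ l, K (lam i - lam l)) * c i ^ 2 := fun i _ =>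
    mul_nonneg (sub_pos.2 (hD i)).le (sq_nonneg _)
  have h5 : ∑ i, (xi (lam i) - (1 / (N:ℝ)) * ∑ l, K (lam i - lam l)) * c i ^ 2 = 0 :=
    le_antisymm (by linarith) (Finset.sum_nonneg h4)
  ext i
  have := (Finset.sum_eq_zero_iff_of_nonneg h4).1 h5 i (Finset.mem_univ _)
  have := (mul_eq_zero.1 this).resolve_left (sub_pos.2 (hD i)).ne'
  simpa using this

lemma uniq_aux {K u : ℝ → ℝ} {q : ℝ} (hK : Continuous K) (hKp : ∀ x, 0 < K x) (hq : 0 ≤ q)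
    (hK1 : ∀ x, ∫ m in (-q)..q, K (x - m) ≤ 1) (hu : Continuous u)
    (he : ∀ x, u x + ∫ m in (-q)..q, K (x - m) * u m = 0)
    {x0 : ℝ} (hx0 : x0 ∈ Set.Icc (-q) q) (hmax : ∀ x ∈ Set.Icc (-q) q, |u x| ≤ u x0) : u x0 ≤ 0 := by
  by_contra hA
  push Not at hA
  rcases hq.eq_or_lt with rfl | hq'
  · have := he x0
    simp at this; linarith
  have hpos : 0 < ∫ m in (-q)..q, K (x0 - m) * (u x0 + u m) := by
    refine intervalIntegral.integral_pos (by linarith) (Continuous.continuousOn (by fun_prop)) (fun m hm => ?_)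
      ⟨x0, hx0, mul_pos (hKp _) (by linarith)⟩
    have := (abs_le.1 (hmax m ⟨hm.1.le, hm.2⟩)).1
    exact mul_nonneg (hKp _).le (by linarith)
  have e : ∫ m in (-q)..q, K (x0 - m) * (u x0 + u m) = u x0 * (∫ m in (-q)..q, K (x0 - m)) + ∫ m in (-q)..q, K (x0 - m) * u m := by
    rw [← intervalIntegral.integral_const_mul, ← intervalIntegral.integral_add]
    · congr 1; ext m; ring
    · exact Continuous.intervalIntegrable (by fun_prop) _ _
    · exact Continuous.intervalIntegrable (by fun_prop) _ _
  rw [e] at hpos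
  have := he x0
  nlinarith [hK1 x0]

lemma uniq {K u : ℝ → ℝ} {q : ℝ} (hK : Continuous K) (hKp : ∀ x, 0 < K x) (hq : 0 ≤ q)
    (hK1 : ∀ x, ∫ m in (-q)..q, K (x - m) ≤ 1) (hu : Continuous u)
    (he : ∀ x, u x + ∫ m in (-q)..q, K (x - m) * u m = 0) (x : ℝ) : u x = 0 := by
  obtain ⟨x0, hx0, hm⟩ := isCompact_Icc.exists_isMaxOn (s := Set.Icc (-q) q) ⟨0, by constructor <;> linarith⟩ (hu.abs.continuousOn)
  have hm' : ∀ x ∈ Set.Icc (-q) q, |u x| ≤ |u x0| := fun x hx => hm hx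
  have hz : |u x0| ≤ 0 := by
    rcases abs_cases (u x0) with ⟨h, h'⟩ | ⟨h, h'⟩
    · rw [h] at hm' ⊢
      exact uniq_aux hK hKp hq hK1 hu he hx0 hm'
    · rw [h] at hm' ⊢
      refine uniq_aux (u := fun x => - u x) hK hKp hq hK1 hu.neg (fun x => ?_) hx0 (by simpa using hm')
      have := he x
      simp only [mul_neg, intervalIntegral.integral_neg]
      linarith
  have hz2 : ∀ x ∈ Set.Icc (-q) q, u x = 0 := fun x hx => by
    have := hm' x hx
    have h3 := abs_nonneg (u x)
    exact abs_eq_zero.1 (by linarith)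
  have := he x
  have e : ∫ m in (-q)..q, K (x - m) * u m = 0 := by
    rw [intervalIntegral.integral_congr (g := fun _ => (0:ℝ))]
    · simp
    · intro m hm
      rw [Set.uIcc_of_le (by linarith)] at hm
      simp [hz2 m hm]
  linarith

lemma even_of_eq {K xi g : ℝ → ℝ} {q : ℝ} (hK : Continuous K) (hKp : ∀ x, 0 < K x) (hq : 0 ≤ q)
    (hK1 : ∀ x, ∫ m in (-q)..q, K (x - m) ≤ 1) (hg : Continuous g) (hKe : ∀ x, K (-x) = K x)
    (hxe : ∀ x, xi (-x) = xi x)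
    (he : ∀ x, g x + ∫ m in (-q)..q, K (x - m) * g m = xi x) (x : ℝ) : g (-x) = g x := by
  have hu := uniq (u := fun x => g (-x) - g x) hK hKp hq hK1 (by fun_prop) (fun x => ?_) x
  · linarith
  have h1 := he x
  have h2 := he (-x)
  have e : ∫ m in (-q)..q, K (-x - m) * g m = ∫ m in (-q)..q, K (x - m) * g (-m) := by
    have := intervalIntegral.integral_comp_neg (a := -q) (b := q) (fun m => K (-x - m) * g m)
    rw [neg_neg] at this
    rw [← this]
    congr 1; ext m
    rw [← hKe (-x - -m)]; congr 2; ring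
  rw [e, hxe] at h2
  have e2 : ∫ m in (-q)..q, K (x - m) * (g (-m) - g m) = (∫ m in (-q)..q, K (x - m) * g (-m)) - ∫ m in (-q)..q, K (x - m) * g m := by
    rw [← intervalIntegral.integral_sub]
    · congr 1; ext m; ring
    · exact Continuous.intervalIntegrable (by fun_prop) _ _
    · exact Continuous.intervalIntegrable (by fun_prop) _ _
  rw [e2]; linarith


lemma GG_strictMono {g : ℝ → ℝ} (hg : Continuous g) (hp : ∀ x, 0 < g x) : StrictMono (GG g) := by
  intro x y hxy
  have : GG g y - GG g x = ∫ t in x..y, g t :=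
    intervalIntegral.integral_interval_sub_left (hg.intervalIntegrable _ _) (hg.intervalIntegrable _ _)
  have h2 := intervalIntegral.intervalIntegral_pos_of_pos_on (hg.intervalIntegrable x y) (fun x _ => hp x) hxy
  linarith

lemma GG_sub {g : ℝ → ℝ} (hg : Continuous g) (x y : ℝ) : GG g y - GG g x = ∫ t in x..y, g t :=
    intervalIntegral.integral_interval_sub_left (hg.intervalIntegrable _ _) (hg.intervalIntegrable _ _)

lemma GG_neg {g : ℝ → ℝ} (he : ∀ x, g (-x) = g x) (x : ℝ) : GG g (-x) = - GG g x := by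
  unfold GG
  have := intervalIntegral.integral_comp_neg (a := 0) (b := x) (fun m => g m)
  simp only [he, neg_zero] at this
  rw [this, intervalIntegral.integral_symm]

lemma mono_bound {g A : ℝ → ℝ} {q lo hi : ℝ} {N n m k : ℕ} {lam : Fin n → ℝ}
    (hg : Continuous g) (hp : ∀ x, 0 < g x) (hev : ∀ x, g (-x) = g x) (hq : 0 ≤ q) (hN : 0 < N)
    (hint : ∫ t in (-q)..q, g t = (n:ℝ) / N) (hk : k + 1 = 2 * m) (hI : Interlaced N n k g lam)
    (hA : Monotone A) (hAc : Continuous A) (hlohi : lo ≤ hi) (hlo : ∀ t ∈ Set.Icc (-q) q, lo ≤ A t)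
    (hhi : ∀ i, A (lam i) ≤ hi) :
    (1 / (N:ℝ)) * ∑ i, A (lam i) ≤ (∫ t in (-q)..q, A t * g t) + m * (hi - lo) / N := by
  have hN' : (0:ℝ) < N := by exact_mod_cast hN
  have hmono := GG_strictMono hg hp
  have hGc : Continuous (GG g) := intervalIntegral.continuous_primitive (fun a b => hg.intervalIntegrable a b) 0
  have hGq : GG g q = (n:ℝ) / 2 / N := by
    have h1 := GG_sub hg (-q) q
    rw [GG_neg hev, hint] at h1
    have : (n:ℝ) / 2 / N = (n / N) / 2 := by ring
    linarith
  have hGq' : GG g (-q) = -((n:ℝ) / 2 / N) := by rw [GG_neg hev, hGq]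
  have hkm : (k:ℝ) = 2 * m - 1 := by
    have : (k:ℝ) + 1 = 2 * m := by exact_mod_cast hk
    linarith
  have hy : ∀ j : ℕ, ∃ y, j ≤ n → (y ∈ Set.Icc (-q) q ∧ GG g y = ((j:ℝ) - n / 2) / N) := by
    intro j
    by_cases hj : j ≤ n
    · have hj' : (j:ℝ) ≤ n := by exact_mod_cast hj
      have := intermediate_value_Icc (by linarith : -q ≤ q) hGc.continuousOn
      rw [hGq, hGq'] at this
      obtain ⟨y, hy, hy2⟩ := this (show ((j:ℝ) - n / 2) / N ∈ _ from ⟨by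
        rw [← neg_div]
        gcongr
        have : (0:ℝ) ≤ j := by positivity
        linarith, by gcongr; linarith⟩)
      exact ⟨y, fun _ => ⟨hy, hy2⟩⟩
    · exact ⟨0, fun h => absurd h hj⟩
  choose y hy using hy
  have hy0 : y 0 = -q := by
    apply hmono.injective
    rw [(hy 0 (Nat.zero_le _)).2, hGq']; push_cast; ring
  have hyn : y n = q := by
    apply hmono.injective
    rw [(hy n le_rfl).2, hGq]; ring
  have hyle : ∀ j, j + 1 ≤ n → y j ≤ y (j+1) := by
    intro j hj
    rw [← hmono.le_iff_le, (hy j (by omega)).2, (hy (j+1) hj).2]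
    gcongr; push_cast; linarith
  have hyint : ∀ j, j + 1 ≤ n → ∫ t in y j..y (j+1), g t = 1 / N := by
    intro j hj
    rw [← GG_sub hg, (hy j (by omega)).2, (hy (j+1) hj).2]
    push_cast; ring
  set a : ℕ → ℝ := fun j => ∫ t in y j..y (j+1), A t * g t with ha
  have hsum : ∑ j ∈ Finset.range n, a j = ∫ t in (-q)..q, A t * g t := by
    rw [← hy0, ← hyn]
    exact intervalIntegral.sum_integral_adjacent_intervals (fun j _ => (hAc.mul hg).intervalIntegrable _ _)
  have hage : ∀ j, j + 1 ≤ n → ∀ c, (∀ t ∈ Set.Icc (y j) (y (j+1)), c ≤ A t) → c / N ≤ a j := by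
    intro j hj c hc
    have : c / N = ∫ t in y j..y (j+1), c * g t := by
      rw [intervalIntegral.integral_const_mul, hyint j hj]; ring
    rw [this]
    refine intervalIntegral.integral_mono_on (hyle j hj) (Continuous.intervalIntegrable (by fun_prop) _ _)
      ((hAc.mul hg).intervalIntegrable _ _) (fun t ht => ?_)
    exact mul_le_mul_of_nonneg_right (hc t ht) (hp t).le
  have halo : ∀ j, j + 1 ≤ n → lo / N ≤ a j := by
    intro j hj
    refine hage j hj lo (fun t ht => hlo t ⟨(hy j (by omega)).1.1.trans ht.1, ht.2.trans (hy (j+1) hj).1.2⟩)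
  set f : ℕ → ℝ := fun i => if h : i < n then A (lam ⟨i, h⟩) / N else 0 with hf
  have hfs : (1 / (N:ℝ)) * ∑ i, A (lam i) = ∑ i ∈ Finset.range n, f i := by
    rw [Finset.sum_range, Finset.mul_sum]
    refine Finset.sum_congr rfl (fun i _ => ?_)
    simp [hf]; ring
  have hfhi : ∀ i, i < n → f i ≤ hi / N := by
    intro i h
    simp only [hf, h, dif_pos]
    gcongr; exact hhi _
  have hfa : ∀ i, i + m + 1 ≤ n → f i ≤ a (i + m) := by
    intro i h
    have hin : i < n := by omega
    simp only [hf, hin, dif_pos]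
    refine hage (i+m) h _ (fun t ht => hA (le_trans ?_ ht.1))
    rw [← hmono.le_iff_le, (hy (i+m) (by omega)).2]
    refine ((hI ⟨i, hin⟩).2).trans (le_of_eq ?_)
    rw [hkm]; push_cast; ring
  rw [hfs, ← hsum]
  obtain ⟨p, r, hn, hpm, hr⟩ : ∃ p r, n = p + r ∧ p ≤ m ∧ (0 < r → p = m) := by
    rcases le_total m n with h | h
    · exact ⟨m, n - m, by omega, le_rfl, fun _ => rfl⟩
    · exact ⟨n, 0, by omega, h, fun h => absurd h (lt_irrefl _)⟩
  have s1 : ∑ i ∈ Finset.range n, f i = ∑ i ∈ Finset.range r, f i + ∑ i ∈ Finset.range p, f (r + i) := by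
    rw [hn, add_comm p r, Finset.sum_range_add]
  have s2 : ∑ i ∈ Finset.range n, a i = ∑ i ∈ Finset.range p, a i + ∑ i ∈ Finset.range r, a (p + i) := by
    rw [hn, Finset.sum_range_add]
  have t1 : ∑ i ∈ Finset.range r, f i ≤ ∑ i ∈ Finset.range r, a (p + i) := by
    refine Finset.sum_le_sum (fun i hi => ?_)
    have hi := Finset.mem_range.1 hi
    have hpm' := hr (by omega)
    rw [hpm', add_comm]
    exact hfa i (by omega)
  have t2 : ∑ i ∈ Finset.range p, f (r + i) ≤ p * (hi / N) := by
    have : ∑ i ∈ Finset.range p, f (r + i) ≤ ∑ i ∈ Finset.range p, hi / N := by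
      refine Finset.sum_le_sum (fun i hi => hfhi _ ?_)
      have hi := Finset.mem_range.1 hi
      omega
    simpa using this
  have t3 : p * (lo / N) ≤ ∑ i ∈ Finset.range p, a i := by
    have : ∑ i ∈ Finset.range p, lo / N ≤ ∑ i ∈ Finset.range p, a i := by
      refine Finset.sum_le_sum (fun i hi => halo _ ?_)
      have hi := Finset.mem_range.1 hi
      omega
    simpa using this
  have t4 : (p:ℝ) * ((hi - lo) / N) ≤ m * ((hi - lo) / N) := by
    have : (p:ℝ) ≤ m := by exact_mod_cast hpm
    exact mul_le_mul_of_nonneg_right this (div_nonneg (by linarith) hN'.le)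
  have t5 : (p:ℝ) * ((hi - lo) / N) = p * (hi / N) - p * (lo / N) := by ring
  rw [s1, s2, mul_div_assoc]
  linarith

lemma sum_symm {n : ℕ} {lam : Fin n → ℝ} (hs : SymmetricVec lam) (A : ℝ → ℝ) :
    ∑ i, A (-lam i) = ∑ i, A (lam i) := by
  rw [← Equiv.sum_comp Fin.revPerm (fun i => A (lam i))]
  refine Finset.sum_congr rfl (fun i _ => ?_)
  rw [← hs i]
  congr 2
  ext; simp [Fin.rev]; omega

lemma anti_bound {g A : ℝ → ℝ} {q lo hi : ℝ} {N n m k : ℕ} {lam : Fin n → ℝ}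
    (hg : Continuous g) (hp : ∀ x, 0 < g x) (hev : ∀ x, g (-x) = g x) (hq : 0 ≤ q) (hN : 0 < N)
    (hint : ∫ t in (-q)..q, g t = (n:ℝ) / N) (hk : k + 1 = 2 * m) (hI : Interlaced N n k g lam)
    (hs : SymmetricVec lam)
    (hA : Antitone A) (hAc : Continuous A) (hlohi : lo ≤ hi) (hlo : ∀ t ∈ Set.Icc (-q) q, lo ≤ A t)
    (hhi : ∀ i, A (lam i) ≤ hi) :
    (1 / (N:ℝ)) * ∑ i, A (lam i) ≤ (∫ t in (-q)..q, A t * g t) + m * (hi - lo) / N := by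
  have h := mono_bound (A := fun t => A (-t)) hg hp hev hq hN hint hk hI (fun x y h => hA (by linarith))
    (by fun_prop) hlohi (fun t ht => hlo _ ⟨by linarith [ht.2], by linarith [ht.1]⟩)
    (fun i => by rw [← hs i]; exact hhi _)
  rw [sum_symm hs A] at h
  have e := intervalIntegral.integral_comp_neg (a := -q) (b := q) (fun m => A m * g m)
  simp only [hev, neg_neg] at e
  rw [e] at h
  exact h


/-- Fourier transform of a real function -/
def ft (f : ℝ → ℝ) (v : ℝ) : ℂ := 𝓕 (fun x : ℝ => (f x : ℂ)) v

/-- real convolution -/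
def cv (f g : ℝ → ℝ) (x : ℝ) : ℝ := ∫ t, f t * g (x - t)

lemma cv_eq (f g : ℝ → ℝ) : (fun x : ℝ => (cv f g x : ℂ)) =
    convolution (fun x : ℝ => (f x : ℂ)) (fun x : ℝ => (g x : ℂ)) (ContinuousLinearMap.mul ℂ ℂ) volume := by
  ext x
  simp only [cv, convolution_def, ContinuousLinearMap.mul_apply']
  rw [← integral_complex_ofReal]
  simp

lemma ft_cv {f g : ℝ → ℝ} (hf : Integrable f) (hg : Integrable g) (v : ℝ) : ft (cv f g) v = ft f v * ft g v := by
  unfold ft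
  rw [cv_eq]
  exact Real.fourier_mul_convolution_eq hf.ofReal hg.ofReal v

lemma cv_integrable {f g : ℝ → ℝ} (hf : Integrable f) (hg : Integrable g) : Integrable (cv f g) := by
  exact hf.integrable_convolution (ContinuousLinearMap.mul ℝ ℝ) hg

lemma cv_continuous {f g : ℝ → ℝ} (hf : Integrable f) (hg : Continuous g) {C : ℝ} (hb : ∀ x, |g x| ≤ C) :
    Continuous (cv f g) := by
  refine BddAbove.continuous_convolution_right_of_integrable (ContinuousLinearMap.mul ℝ ℝ) ?_ hf hg
  exact ⟨C, by rintro _ ⟨x, rfl⟩; exact hb x⟩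

lemma cv_nonneg {f g : ℝ → ℝ} (hf : ∀ x, 0 ≤ f x) (hg : ∀ x, 0 ≤ g x) (x : ℝ) : 0 ≤ cv f g x :=
  integral_nonneg (fun t => mul_nonneg (hf t) (hg _))

lemma ft_add {f g : ℝ → ℝ} (hf : Integrable f) (hg : Integrable g) (v : ℝ) :
    ft (fun x => f x + g x) v = ft f v + ft g v := by
  unfold ft
  rw [Real.fourier_eq, Real.fourier_eq, Real.fourier_eq, ← integral_add]
  · congr 1; ext x; push_cast; rw [smul_add]
  · exact (Real.fourierIntegral_convergent_iff v).2 hf.ofReal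
  · exact (Real.fourierIntegral_convergent_iff v).2 hg.ofReal

lemma ft_neg (f : ℝ → ℝ) (v : ℝ) : ft (fun x => - f x) v = - ft f v := by
  unfold ft
  rw [Real.fourier_eq, Real.fourier_eq, ← integral_neg]
  congr 1; ext x; push_cast; rw [smul_neg]

lemma ft_inj {f g : ℝ → ℝ} (hf : Integrable f) (hg : Integrable g) (hfc : Continuous f) (hgc : Continuous g)
    (h : ∀ v, ft f v = ft g v) (x : ℝ) : f x = g x := by
  have h0 : 𝓕 (fun x : ℝ => ((f x + - g x : ℝ) : ℂ)) = fun _ => 0 := by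
    ext v
    have := ft_add hf hg.neg v
    have h2 := ft_neg g v
    rw [show ft (-g) v = ft (fun x => -g x) v from rfl, h2, h, add_neg_cancel] at this
    exact this
  have h1 := Continuous.fourierInv_fourier_eq (f := fun x : ℝ => ((f x + - g x : ℝ) : ℂ)) (by fun_prop)
    (hf.add hg.neg).ofReal (by rw [h0]; exact integrable_zero _ _ _)
  rw [h0] at h1
  have h2 := congrFun h1 x
  rw [Real.fourierInv_eq] at h2
  simp at h2
  have : ((f x + -g x : ℝ) : ℂ) = 0 := by push_cast; rw [← sub_eq_add_neg]; exact h2.symm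
  have := Complex.ofReal_eq_zero.1 this
  linarith

lemma ft_Tk (hα : 0 < α) (hαβ : α < β) (v : ℝ) : ft (Tk α β) v = (Mk α β (2 * π * v) : ℂ) :=
  congrFun (Tk_fourier hα hαβ) v

lemma Tk_abs_le (hα : 0 < α) (hαβ : α < β) : ∃ C, ∀ x, |Tk α β x| ≤ C := by
  obtain ⟨C, hC, h⟩ := Tk_bound hα hαβ
  refine ⟨C, fun x => ?_⟩
  rw [abs_of_pos (Tk_pos hα hαβ x)]
  refine (h x).trans ?_
  have hβ : 0 < β := hα.trans hαβ
  have : Real.exp (-(π / β) * |x|) ≤ 1 := Real.exp_le_one_iff.2 (by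
    rw [neg_mul]; exact neg_nonpos.2 (by positivity))
  nlinarith

lemma Kml_eq (ζ : ℝ) : Kml ζ = Tk ((π - 2 * ζ) / 2) (π / 2) := by
  ext x
  unfold Kml Tk
  have e1 : π * ((π - 2 * ζ) / 2) / (π / 2) = π - 2 * ζ := by field_simp
  have e2 : π * x / (π / 2) = 2 * x := by field_simp
  rw [e1, e2, Real.sin_pi_sub, Real.cos_pi_sub, Real.cosh_two_mul, Real.cos_two_mul, Real.cosh_sq, Real.cos_sq']
  rw [show 2 * (π / 2) = π by ring, div_mul_div_comm, one_mul]
  congr 1; ring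

lemma xiMl_eq (ζ : ℝ) : xiMl ζ = Tk ((π - ζ) / 2) (π / 2) := by
  ext x
  unfold xiMl Tk
  have e1 : π * ((π - ζ) / 2) / (π / 2) = π - ζ := by field_simp
  have e2 : π * x / (π / 2) = 2 * x := by field_simp
  have e3 : Real.cos ζ = 2 * Real.cos (ζ / 2) ^ 2 - 1 := by
    rw [← Real.cos_two_mul]; congr 1; ring
  rw [e1, e2, Real.sin_pi_sub, Real.cos_pi_sub, Real.cosh_two_mul, e3, Real.cosh_sq, Real.cos_sq']
  rw [show 2 * (π / 2) = π by ring, div_mul_div_comm, one_mul]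
  congr 1; ring

lemma rhoInf_eq {ζ : ℝ} (h : 0 < ζ) : rhoInf ζ = Tk (ζ / 2) ζ := by
  ext x
  unfold rhoInf Tk
  have e1 : π * (ζ / 2) / ζ = π / 2 := by field_simp
  rw [e1]; simp
  ring

lemma Mk_ne {w : ℝ} (hw : w ≠ 0) : Mk α β w = Real.sinh (α * w) / Real.sinh (β * w) := by simp [Mk, hw]

lemma M_id1 {ζ : ℝ} (h0 : 0 < ζ) (h1 : ζ < π / 2) (w : ℝ) :
    (1 + Mk ((π - 2 * ζ) / 2) (π / 2) w) * Mk (ζ / 2) ζ w = Mk ((π - ζ) / 2) (π / 2) w := by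
  by_cases hw : w = 0
  · have := Real.pi_pos
    subst hw; simp only [Mk, if_true]; field_simp; ring
  rw [Mk_ne hw, Mk_ne hw, Mk_ne hw]
  have s1 : Real.sinh (π / 2 * w) ≠ 0 := by
    rw [Ne, Real.sinh_eq_zero]; have := Real.pi_pos; positivity
  have s2 : Real.sinh (ζ / 2 * w) ≠ 0 := by
    rw [Ne, Real.sinh_eq_zero]; positivity
  have e1 : Real.sinh (ζ * w) = 2 * Real.sinh (ζ / 2 * w) * Real.cosh (ζ / 2 * w) := by
    rw [← Real.sinh_two_mul]; congr 1; ring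
  have s3 := (Real.cosh_pos (ζ / 2 * w)).ne'
  have e2 : Real.sinh (π / 2 * w) = Real.sinh ((π - ζ) / 2 * w + ζ / 2 * w) := by congr 1; ring
  have e3 : Real.sinh ((π - 2 * ζ) / 2 * w) = Real.sinh ((π - ζ) / 2 * w - ζ / 2 * w) := by congr 1; ring
  have e4 : Real.sinh (π / 2 * w) + Real.sinh ((π - 2 * ζ) / 2 * w) = 2 * Real.sinh ((π - ζ) / 2 * w) * Real.cosh (ζ / 2 * w) := by
    rw [e2, e3, Real.sinh_add, Real.sinh_sub]; ring
  rw [e1]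
  clear e1 e2 e3
  revert s1 s2 s3 e4
  generalize Real.sinh (π / 2 * w) = a
  generalize Real.sinh ((π - 2 * ζ) / 2 * w) = b
  generalize Real.sinh ((π - ζ) / 2 * w) = c
  generalize Real.cosh (ζ / 2 * w) = d
  generalize Real.sinh (ζ / 2 * w) = e
  intro s1 s2 s3 e4
  field_simp
  linarith

lemma M_id2 {ζ : ℝ} (h0 : 0 < ζ) (h1 : ζ < π / 2) (w : ℝ) :
    Mk ((π - ζ) / 2) (π / 2) w * Mk ((π - 2 * ζ) / 2) ((π - ζ) / 2) w = Mk ((π - 2 * ζ) / 2) (π / 2) w := by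
  have h2 : 0 < π - ζ := by linarith
  by_cases hw : w = 0
  · have := Real.pi_pos
    subst hw; simp only [Mk, if_true]; field_simp
  rw [Mk_ne hw, Mk_ne hw, Mk_ne hw]
  have s1 : Real.sinh ((π - ζ) / 2 * w) ≠ 0 := by
    rw [Ne, Real.sinh_eq_zero]; have := Real.pi_pos; positivity
  field_simp


lemma cv_in {K g : ℝ → ℝ} {q : ℝ} (hq : 0 ≤ q) (l : ℝ) :
    ∫ m in (-q)..q, K (l - m) * g m = cv ((Set.Ioc (-q) q).indicator g) K l := by
  rw [intervalIntegral.integral_of_le (by linarith), ← integral_indicator measurableSet_Ioc]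
  unfold cv
  congr 1; ext t
  by_cases h : t ∈ Set.Ioc (-q) q <;> simp [h, mul_comm]

lemma BEml_cont {ζ q : ℝ} {g : ℝ → ℝ} (h0 : 0 < ζ) (h1 : ζ < π / 2) (hq : 0 ≤ q) (h : IsBEml ζ q g) :
    Continuous g := by
  obtain ⟨hi, -, he⟩ := h
  have ha : 0 < (π - 2 * ζ) / 2 := by linarith
  have hab : (π - 2 * ζ) / 2 < π / 2 := by linarith
  have ha' : 0 < (π - ζ) / 2 := by linarith
  have hab' : (π - ζ) / 2 < π / 2 := by linarith
  have e : g = fun l => xiMl ζ l - cv ((Set.Ioc (-q) q).indicator g) (Kml ζ) l := by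
    ext l
    rw [← he l, cv_in hq]; ring
  obtain ⟨C, hC⟩ := Tk_abs_le ha hab
  rw [e, xiMl_eq, Kml_eq]
  exact (Tk_continuous ha' hab').sub (cv_continuous (hi.indicator measurableSet_Ioc) (Tk_continuous ha hab) hC)

lemma BEml_ge {ζ q : ℝ} {g : ℝ → ℝ} (h0 : 0 < ζ) (h1 : ζ < π / 2) (hq : 0 ≤ q) (h : IsBEml ζ q g)
    (hp : ∀ x, 0 < g x) (x : ℝ) : rhoInf ζ x ≤ g x := by
  have hgc := BEml_cont h0 h1 hq h
  obtain ⟨hi, -, he⟩ := h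
  have ha : 0 < (π - 2 * ζ) / 2 := by linarith
  have hab : (π - 2 * ζ) / 2 < π / 2 := by linarith
  have ha' : 0 < (π - ζ) / 2 := by linarith
  have hab' : (π - ζ) / 2 < π / 2 := by linarith
  have hb : (π - 2 * ζ) / 2 < (π - ζ) / 2 := by linarith
  have hs : 0 < ζ / 2 := by linarith
  have hs' : ζ / 2 < ζ := by linarith
  set gi := (Set.Ioc (-q) q).indicator g with hgi
  set go := (Set.Ioc (-q) q)ᶜ.indicator g with hgo
  have hgii : Integrable gi := hi.indicator measurableSet_Ioc
  have hgoi : Integrable go := hi.indicator measurableSet_Ioc.compl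
  have hsum : ∀ t, gi t + go t = g t := fun t => Set.indicator_self_add_compl_apply _ _ _
  have hgo0 : ∀ t, 0 ≤ go t := fun t => Set.indicator_nonneg (fun t _ => (hp t).le) t
  set P := cv go (Tk ((π - 2 * ζ) / 2) ((π - ζ) / 2)) with hP
  have hPi : Integrable P := cv_integrable hgoi (Tk_integrable ha hb)
  have hP0 : ∀ t, 0 ≤ P t := cv_nonneg hgo0 (fun t => (Tk_pos ha hb t).le)
  set W := cv P (Tk (ζ / 2) ζ) with hW
  have hWi : Integrable W := cv_integrable hPi (Tk_integrable hs hs')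
  have hW0 : ∀ t, 0 ≤ W t := cv_nonneg hP0 (fun t => (Tk_pos hs hs' t).le)
  obtain ⟨C, hC⟩ := Tk_abs_le hs hs'
  have hWc : Continuous W := cv_continuous hPi (Tk_continuous hs hs') hC
  have key : g x = Tk (ζ / 2) ζ x + W x := by
    refine ft_inj (g := fun x => Tk (ζ / 2) ζ x + W x) hi ((Tk_integrable hs hs').add hWi) hgc ((Tk_continuous hs hs').add hWc) (fun v => ?_) x
    rw [ft_add (Tk_integrable hs hs') hWi, ft_cv hPi (Tk_integrable hs hs'), ft_cv hgoi (Tk_integrable ha hb),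
      ft_Tk hs hs', ft_Tk ha hb]
    have e1 : ft g v = ft gi v + ft go v := by
      rw [← ft_add hgii hgoi]; congr 1; ext t; rw [hsum]
    have e2 : ft g v + ft gi v * Mk ((π - 2 * ζ) / 2) (π / 2) (2 * π * v) = Mk ((π - ζ) / 2) (π / 2) (2 * π * v) := by
      rw [← ft_Tk ha hab, ← ft_cv hgii (Tk_integrable ha hab), ← ft_add hi (cv_integrable hgii (Tk_integrable ha hab)),
        ← ft_Tk ha' hab', ← Kml_eq ζ, ← xiMl_eq ζ]
      congr 1; ext t
      rw [← he t, cv_in hq]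
    have i1 := M_id1 h0 h1 (2 * π * v)
    have i2 := M_id2 h0 h1 (2 * π * v)
    have i3 := Mk_pos ha hab (2 * π * v)
    revert e2 i1 i2 i3
    generalize Mk ((π - 2 * ζ) / 2) (π / 2) (2 * π * v) = mK
    generalize Mk ((π - ζ) / 2) (π / 2) (2 * π * v) = mX
    generalize Mk ((π - 2 * ζ) / 2) ((π - ζ) / 2) (2 * π * v) = mQ
    generalize Mk (ζ / 2) ζ (2 * π * v) = mS
    intro e2 i1 i2 i3
    have hne : (1 + (mK:ℂ)) ≠ 0 := by
      have : (1 + mK : ℝ) ≠ 0 := by positivity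
      exact_mod_cast this
    apply mul_left_cancel₀ hne
    have i1' : (1 + (mK:ℂ)) * mS = mX := by exact_mod_cast i1
    have i2' : (mX:ℂ) * mQ = mK := by exact_mod_cast i2
    linear_combination e2 - (mK:ℂ) * (- e1) + (-1 - ft go v * mQ) * i1' - ft go v * i2'
  rw [key, rhoInf_eq h0]
  linarith [hW0 x]

lemma Kml_int_le {ζ q : ℝ} (h0 : 0 < ζ) (h1 : ζ < π / 2) (hq : 0 ≤ q) (x : ℝ) :
    ∫ m in (-q)..q, Kml ζ (x - m) ≤ 1 := by
  have ha : 0 < (π - 2 * ζ) / 2 := by linarith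
  have hab : (π - 2 * ζ) / 2 < π / 2 := by linarith
  rw [Kml_eq, intervalIntegral.integral_of_le (by linarith)]
  have hI : Integrable (fun m => Tk ((π - 2 * ζ) / 2) (π / 2) (x - m)) := (Tk_integrable ha hab).comp_sub_left x
  calc _ ≤ ∫ m, Tk ((π - 2 * ζ) / 2) (π / 2) (x - m) :=
        setIntegral_le_integral hI (ae_of_all _ (fun m => (Tk_pos ha hab _).le))
    _ = ((π - 2 * ζ) / 2) / (π / 2) := by
        rw [integral_sub_left_eq_self (fun m => Tk ((π - 2 * ζ) / 2) (π / 2) m), Tk_integral ha hab]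
    _ ≤ 1 := by rw [div_le_one (by linarith)]; exact hab.le

lemma BEml_even {ζ q : ℝ} {g : ℝ → ℝ} (h0 : 0 < ζ) (h1 : ζ < π / 2) (hq : 0 ≤ q) (h : IsBEml ζ q g)
    (x : ℝ) : g (-x) = g x := by
  have ha : 0 < (π - 2 * ζ) / 2 := by linarith
  have hab : (π - 2 * ζ) / 2 < π / 2 := by linarith
  refine even_of_eq (K := Kml ζ) (xi := xiMl ζ) ?_ ?_ hq (Kml_int_le h0 h1 hq) (BEml_cont h0 h1 hq h) ?_ ?_ h.2.2 x
  · rw [Kml_eq]; exact Tk_continuous ha hab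
  · rw [Kml_eq]; exact Tk_pos ha hab
  · intro x; rw [Kml_eq, Tk_neg]
  · intro x; rw [xiMl_eq, Tk_neg]

lemma psd_cos {n : ℕ} (c lam : Fin n → ℝ) (w : ℝ) : 0 ≤ ∑ i, ∑ j, c i * c j * Real.cos (w * (lam i - lam j)) := by
  have : ∑ i, ∑ j, c i * c j * Real.cos (w * (lam i - lam j)) =
      (∑ i, c i * Real.cos (w * lam i)) ^ 2 + (∑ i, c i * Real.sin (w * lam i)) ^ 2 := by
    rw [sq, sq, Finset.sum_mul_sum, Finset.sum_mul_sum, ← Finset.sum_add_distrib]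
    refine Finset.sum_congr rfl (fun i _ => ?_)
    rw [← Finset.sum_add_distrib]
    refine Finset.sum_congr rfl (fun j _ => ?_)
    rw [mul_sub, Real.cos_sub]; ring
  rw [this]; positivity

lemma Tk_cos_int (hα : 0 < α) (hαβ : α < β) (x : ℝ) :
    Tk α β x = ∫ v, Mk α β (2 * π * v) * Real.cos (2 * π * v * x) := by
  have h := congrArg Complex.re (Tk_inv hα hαβ x)
  rw [Real.fourierInv_eq', Complex.ofReal_re] at h
  rw [← h]
  have hI : Integrable (fun v : ℝ => Complex.exp (↑(2 * π * inner ℝ v x) * Complex.I) • (Mk α β (2 * π * v) : ℂ)) := by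
    simp only [smul_eq_mul]
    refine (Mk_integrable' hα hαβ).ofReal.bdd_mul (c := 1) ?_ ?_
    · exact (by fun_prop : Continuous _).aestronglyMeasurable
    · exact ae_of_all _ (fun w => (Complex.norm_exp_ofReal_mul_I _).le)
  have := integral_re hI
  simp only [RCLike.re_to_complex] at this
  rw [← this]
  congr 1; ext v
  rw [smul_eq_mul, Complex.re_mul_ofReal, Complex.exp_ofReal_mul_I_re, mul_comm]
  simp
  left; congr 1; ring

lemma Tk_psd (hα : 0 < α) (hαβ : α < β) {n : ℕ} (c lam : Fin n → ℝ) :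
    0 ≤ ∑ i, ∑ j, c i * c j * Tk α β (lam i - lam j) := by
  have hI : ∀ x, Integrable (fun v => Mk α β (2 * π * v) * Real.cos (2 * π * v * x)) := by
    intro x
    refine (Mk_integrable' hα hαβ).mul_bdd (c := 1) ?_ ?_
    · exact (by fun_prop : Continuous _).aestronglyMeasurable
    · exact ae_of_all _ (fun w => Real.abs_cos_le_one _)
  have : ∑ i, ∑ j, c i * c j * Tk α β (lam i - lam j) =
      ∫ v, ∑ i, ∑ j, c i * c j * (Mk α β (2 * π * v) * Real.cos (2 * π * v * (lam i - lam j))) := by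
    rw [integral_finsetSum]
    · refine Finset.sum_congr rfl (fun i _ => ?_)
      rw [integral_finsetSum]
      · refine Finset.sum_congr rfl (fun j _ => ?_)
        rw [integral_const_mul, Tk_cos_int hα hαβ]
      · intro j _; exact (hI _).const_mul _
    · intro i _
      exact integrable_finsetSum _ (fun j _ => (hI _).const_mul _)
  rw [this]
  refine integral_nonneg (fun v => ?_)
  have e : ∑ i, ∑ j, c i * c j * (Mk α β (2 * π * v) * Real.cos (2 * π * v * (lam i - lam j)))
    = Mk α β (2 * π * v) * ∑ i, ∑ j, c i * c j * Real.cos (2 * π * v * (lam i - lam j)) := by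
    rw [Finset.mul_sum]
    refine Finset.sum_congr rfl (fun i _ => ?_)
    rw [Finset.mul_sum]
    refine Finset.sum_congr rfl (fun j _ => ?_)
    ring
  simp only [e]
  exact mul_nonneg (Mk_pos hα hαβ _).le (psd_cos _ _ _)


lemma Tk_anti (hα : 0 < α) (hαβ : α < β) {x y : ℝ} (h : |x| ≤ |y|) : Tk α β y ≤ Tk α β x := by
  have hβ : 0 < β := hα.trans hαβ
  have := Real.sin_pos_of_pos_of_lt_pi (Tk_ang hα hαβ).1 (Tk_ang hα hαβ).2
  unfold Tk
  refine mul_le_mul_of_nonneg_left ?_ (by positivity)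
  refine div_le_div_of_nonneg_left this.le (Tk_den_pos hα hαβ x) ?_
  have : Real.cosh (π * x / β) ≤ Real.cosh (π * y / β) := by
    rw [Real.cosh_le_cosh, abs_div, abs_div, abs_mul, abs_mul]
    gcongr
  linarith

lemma S_lower {ζ y : ℝ} (h0 : 0 < ζ) (hy : 0 ≤ y) :
    π / (2 * ζ) * (1 / 4 - ∫ t in (0:ℝ)..y, rhoInf ζ t) ≤ rhoInf ζ y := by
  have hs : 0 < ζ / 2 := by linarith
  have hs' : ζ / 2 < ζ := by linarith
  have hi : Integrable (rhoInf ζ) := by rw [rhoInf_eq h0]; exact Tk_integrable hs hs'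
  have h4 : ∫ t in Set.Ioi (0:ℝ), rhoInf ζ t = 1 / 4 := by
    have := integral_comp_abs (f := rhoInf ζ)
    have e : (fun x => rhoInf ζ |x|) = rhoInf ζ := by
      ext x
      rcases abs_cases x with ⟨h, _⟩ | ⟨h, _⟩
      · rw [h]
      · rw [h, rhoInf_eq h0, Tk_neg]
    rw [e] at this
    have e2 : ∫ x, rhoInf ζ x = 1 / 2 := by
      rw [rhoInf_eq h0, Tk_integral hs hs']; field_simp
    linarith
  have h5 := intervalIntegral.integral_interval_add_Ioi (a := 0) (b := y) hi.integrableOn (hi.integrableOn (s := Set.Ioi y))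
  rw [h4] at h5
  have ha : 0 < π / ζ := by have := Real.pi_pos; positivity
  have h6 : ∫ t in Set.Ioi y, rhoInf ζ t ≤ Real.exp (-(π / ζ) * y) / π := by
    have e : ∫ t in Set.Ioi y, 1 / ζ * Real.exp (-(π / ζ) * t) = Real.exp (-(π / ζ) * y) / π := by
      rw [integral_const_mul, integral_exp_mul_Ioi (by linarith)]
      have := Real.pi_pos
      field_simp
    rw [← e]
    refine setIntegral_mono_on hi.integrableOn ((integrableOn_exp_mul_Ioi (by linarith) y).const_mul _) measurableSet_Ioi (fun t _ => ?_)
    unfold rhoInf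
    have h : Real.exp (π * t / ζ) / 2 ≤ Real.cosh (π * t / ζ) := by
      rw [Real.cosh_eq]; have := Real.exp_pos (-(π * t / ζ)); linarith
    calc 1 / (2 * ζ * Real.cosh (π * t / ζ)) ≤ 1 / (2 * ζ * (Real.exp (π * t / ζ) / 2)) := by gcongr
      _ = _ := by
        rw [show -(π / ζ) * t = -(π * t / ζ) by ring, Real.exp_neg]; field_simp
  have h7 : Real.exp (-(π / ζ) * y) / (2 * ζ) ≤ rhoInf ζ y := by
    unfold rhoInf
    have h : Real.cosh (π * y / ζ) ≤ Real.exp (π * y / ζ) := by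
      rw [Real.cosh_eq]
      have : Real.exp (-(π * y / ζ)) ≤ Real.exp (π * y / ζ) := by
        apply Real.exp_le_exp.2
        have : 0 ≤ π * y / ζ := by have := Real.pi_pos; positivity
        linarith
      linarith
    have hc := Real.cosh_pos (π * y / ζ)
    calc _ = 1 / (2 * ζ * Real.exp (π * y / ζ)) := by
          rw [show -(π / ζ) * y = -(π * y / ζ) by ring, Real.exp_neg]; field_simp
      _ ≤ _ := by gcongr
  refine le_trans ?_ h7
  have h8 : 1 / 4 - ∫ t in (0:ℝ)..y, rhoInf ζ t ≤ Real.exp (-(π / ζ) * y) / π := by linarith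
  have h9 := mul_le_mul_of_nonneg_left h8 (show 0 ≤ π / (2 * ζ) by have := Real.pi_pos; positivity)
  refine h9.trans (le_of_eq ?_)
  have := Real.pi_pos
  field_simp

lemma Kml_zero_le {ζ : ℝ} (h0 : 0 < ζ) (h1 : ζ < π / 2) : Kml ζ 0 ≤ 1 / (π * ζ) := by
  unfold Kml
  have hs : 0 < Real.sin ζ := Real.sin_pos_of_pos_of_lt_pi h0 (by linarith)
  have hc : 0 < Real.cos ζ := Real.cos_pos_of_mem_Ioo ⟨by linarith, h1⟩
  have ht := Real.lt_tan h0 h1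
  rw [Real.tan_eq_sin_div_cos, lt_div_iff₀ hc] at ht
  have hpi := Real.pi_pos
  rw [Real.sin_two_mul, Real.sinh_zero, div_le_div_iff₀ (by positivity) (by positivity)]
  have : 0 < π * Real.sin ζ := by positivity
  nlinarith [mul_lt_mul_of_pos_left ht this]

lemma GG_abs_le {g : ℝ → ℝ} {N n k : ℕ} {lam : Fin n → ℝ} (hN : 0 < N) (hev : ∀ x, g (-x) = g x)
    (hI : Interlaced N n k g lam) (i : Fin n) : GG g |lam i| ≤ ((n:ℝ) + k) / (2 * N) := by
  have hN' : (0:ℝ) < N := by exact_mod_cast hN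
  have hi : (i.1:ℝ) + 1 ≤ n := by exact_mod_cast i.2
  have hi0 : (0:ℝ) ≤ i.1 := by positivity
  obtain ⟨h1, h2⟩ := hI i
  have e : ((n:ℝ) + k) / (2 * N) = ((n + k) / 2) / N := by field_simp
  rw [e]
  rcases abs_cases (lam i) with ⟨h, _⟩ | ⟨h, _⟩
  · rw [h]
    refine h2.trans ?_
    gcongr; linarith
  · rw [h, GG_neg hev]
    have : -((((i.1 : ℝ) + 1) - (k : ℝ) / 2 - ((n : ℝ) + 1) / 2) / N) ≤ ((n + k) / 2) / N := by
      rw [← neg_div]; gcongr; linarith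
    linarith

lemma ml_small {ζ q : ℝ} {g : ℝ → ℝ} {N n k : ℕ} {lam : Fin n → ℝ} (h0 : 0 < ζ) (h1 : ζ < π / 2) (hq : 0 ≤ q)
    (hkodd : Odd k) (hn : (n:ℝ) ≤ N / 2 - 8 * (k:ℝ) ^ 2)
    (hB : IsBEml ζ q g) (hp : ∀ x, 0 < g x) (hint : ∫ t in (-q)..q, g t = (n:ℝ) / N)
    (hI : Interlaced N n k g lam) (hs : SymmetricVec lam) : IsUnit (Jac (xiMl ζ) (Kml ζ) N n lam) := by
  have ha : 0 < (π - 2 * ζ) / 2 := by linarith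
  have hab : (π - 2 * ζ) / 2 < π / 2 := by linarith
  have hpi := Real.pi_gt_three
  obtain ⟨m', hm'⟩ := hkodd
  obtain ⟨m, hm⟩ : ∃ m, k + 1 = 2 * m := ⟨m' + 1, by omega⟩
  have hk1 : (1:ℝ) ≤ k := by
    have : 1 ≤ k := by omega
    exact_mod_cast this
  have hN' : (0:ℝ) < N := by
    have : (0:ℝ) ≤ n := by positivity
    nlinarith
  have hN : 0 < N := by exact_mod_cast hN'
  have hgc := BEml_cont h0 h1 hq hB
  have hev := BEml_even h0 h1 hq hB
  have hge := BEml_ge h0 h1 hq hB hp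
  have hKc : Continuous (Kml ζ) := by rw [Kml_eq]; exact Tk_continuous ha hab
  have hKan : ∀ {x y : ℝ}, |x| ≤ |y| → Kml ζ y ≤ Kml ζ x := by
    intro x y h; rw [Kml_eq]; exact Tk_anti ha hab h
  have hKp : ∀ x, 0 < Kml ζ x := by rw [Kml_eq]; exact Tk_pos ha hab
  apply jac_isUnit
  · intro c; rw [Kml_eq]; exact Tk_psd ha hab c lam
  intro i
  set x := lam i with hx
  have hK0 : ∀ t, Kml ζ t ≤ Kml ζ 0 := fun t => hKan (by simp)
  have hA := mono_bound (A := fun t => Kml ζ (x - min t x)) (lo := 0) (hi := Kml ζ 0) hgc hp hev hq hN hint hm hI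
    (fun s t hst => hKan (by
      have h1 : min s x ≤ min t x := min_le_min_right _ hst
      have h2 : min t x ≤ x := min_le_right _ _
      rw [abs_of_nonneg (by linarith), abs_of_nonneg (by linarith)]; linarith)) (by fun_prop)
    (hKp 0).le (fun t _ => (hKp _).le) (fun j => hK0 _)
  have hB' := anti_bound (A := fun t => Kml ζ (x - max t x)) (lo := 0) (hi := Kml ζ 0) hgc hp hev hq hN hint hm hI hs
    (fun s t hst => hKan (by
      have h1 : max s x ≤ max t x := max_le_max_right _ hst
      have h2 : x ≤ max s x := le_max_right _ _
      rw [abs_of_nonpos (by linarith), abs_of_nonpos (by linarith)]; linarith)) (by fun_prop)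
    (hKp 0).le (fun t _ => (hKp _).le) (fun j => hK0 _)
  have hdec : ∀ t, Kml ζ (x - t) = Kml ζ (x - min t x) + Kml ζ (x - max t x) - Kml ζ 0 := by
    intro t
    rcases le_total t x with h | h
    · rw [min_eq_left h, max_eq_right h, sub_self]; ring
    · rw [min_eq_right h, max_eq_left h, sub_self]; ring
  have hS : ∑ l, Kml ζ (x - lam l) = ∑ l, Kml ζ (x - min (lam l) x) + ∑ l, Kml ζ (x - max (lam l) x) - n * Kml ζ 0 := by
    rw [Finset.sum_congr rfl (fun l _ => hdec (lam l)), Finset.sum_sub_distrib, Finset.sum_add_distrib]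
    simp
  have hIn : ∫ t in (-q)..q, Kml ζ (x - t) * g t = (∫ t in (-q)..q, Kml ζ (x - min t x) * g t)
      + (∫ t in (-q)..q, Kml ζ (x - max t x) * g t) - Kml ζ 0 * (n / N) := by
    rw [← hint, ← intervalIntegral.integral_const_mul, ← intervalIntegral.integral_add, ← intervalIntegral.integral_sub]
    · congr 1; ext t; rw [hdec]; ring
    all_goals exact Continuous.intervalIntegrable (by fun_prop) _ _
  have hE := hB.2.2 x
  have hmk : (k:ℝ) + 1 = 2 * m := by exact_mod_cast hm
  have hsum : (1 / (N:ℝ)) * ∑ l, Kml ζ (x - lam l) ≤ xiMl ζ x - g x + (k + 1) * Kml ζ 0 / N := by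
    have e : (1 / (N:ℝ)) * ∑ l, Kml ζ (x - lam l) = (1 / (N:ℝ)) * ∑ l, Kml ζ (x - min (lam l) x) +
       (1 / (N:ℝ)) * ∑ l, Kml ζ (x - max (lam l) x) - Kml ζ 0 * (n / N) := by rw [hS]; ring
    have e2 : (k + 1) * Kml ζ 0 / N = 2 * (m * (Kml ζ 0 - 0) / N) := by rw [hmk]; ring
    rw [e, e2]; linarith
  -- lower bound for g x
  have hG := GG_abs_le hN hev hI i
  have hSG : ∫ t in (0:ℝ)..|x|, rhoInf ζ t ≤ GG g |x| := by
    have hc : Continuous (rhoInf ζ) := by rw [rhoInf_eq h0]; exact Tk_continuous (by linarith) (by linarith)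
    exact intervalIntegral.integral_mono_on (abs_nonneg x) (hc.intervalIntegrable _ _) (hgc.intervalIntegrable _ _) (fun t _ => hge t)
  have hlow := S_lower h0 (abs_nonneg x)
  have hx2 : rhoInf ζ |x| ≤ g x := by
    refine le_trans (le_of_eq ?_) (hge x)
    rw [rhoInf_eq h0]
    rcases abs_cases x with ⟨h, _⟩ | ⟨h, _⟩
    · rw [h]
    · rw [h, Tk_neg]
  have hq4 : (8 * (k:ℝ)^2 - k) / (2 * N) ≤ 1 / 4 - ∫ t in (0:ℝ)..|x|, rhoInf ζ t := by
    have : (8 * (k:ℝ)^2 - k) / (2 * N) + ((n:ℝ) + k) / (2 * N) ≤ 1 / 4 := by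
      rw [← add_div, div_le_iff₀ (by positivity)]; linarith
    linarith
  have hfin : (k + 1) * Kml ζ 0 / N < π / (2 * ζ) * ((8 * (k:ℝ)^2 - k) / (2 * N)) := by
    have hz := Kml_zero_le h0 h1
    calc (k + 1) * Kml ζ 0 / N ≤ (k + 1) * (1 / (π * ζ)) / N := by gcongr
      _ = (4 * (k + 1)) / (4 * π * ζ * N) := by field_simp
      _ < (π ^ 2 * (8 * (k:ℝ)^2 - k)) / (4 * π * ζ * N) := by
        apply div_lt_div_of_pos_right _ (by positivity)
        have h7 : 7 * (k:ℝ) ≤ 8 * (k:ℝ)^2 - k := by nlinarith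
        have h9 : 9 ≤ π ^ 2 := by nlinarith
        nlinarith
      _ = _ := by field_simp; ring
  have := mul_le_mul_of_nonneg_left hq4 (show 0 ≤ π / (2 * ζ) by positivity)
  linarith


lemma ml_big {ζ : ℝ} {N n : ℕ} {lam : Fin n → ℝ} (h1 : π / 2 ≤ ζ) (h2 : ζ < π) :
    IsUnit (Jac (xiMl ζ) (Kml ζ) N n lam) := by
  have hpi := Real.pi_pos
  rw [Matrix.isUnit_iff_isUnit_det, isUnit_iff_ne_zero]
  apply det_ne_zero_of_sum_row_lt_diag
  intro i
  have hs : Real.sin (2 * ζ) ≤ 0 := by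
    have := Real.sin_nonneg_of_nonneg_of_le_pi (x := 2 * ζ - π) (by linarith) (by linarith)
    rw [Real.sin_sub_pi] at this; linarith
  have hK : ∀ x, Kml ζ x ≤ 0 := by
    intro x
    unfold Kml
    exact div_nonpos_of_nonpos_of_nonneg hs (by positivity)
  have hx : 0 < xiMl ζ (lam i) := by
    unfold xiMl
    have a1 : 0 < Real.sin ζ := Real.sin_pos_of_pos_of_lt_pi (by linarith) h2
    have a2 : 0 < Real.sin (ζ / 2) := Real.sin_pos_of_pos_of_lt_pi (by linarith) (by linarith)
    positivity
  have e : ∑ j ∈ Finset.univ.erase i, ‖Jac (xiMl ζ) (Kml ζ) N n lam i j‖ = - ((1 / (N:ℝ)) * ∑ j ∈ Finset.univ.erase i, Kml ζ (lam i - lam j)) := by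
    rw [Finset.mul_sum, ← Finset.sum_neg_distrib]
    refine Finset.sum_congr rfl (fun j hj => ?_)
    have : i ≠ j := fun h => (Finset.mem_erase.1 hj).1 h.symm
    have h3 : (1 / (N:ℝ)) * Kml ζ (lam i - lam j) ≤ 0 := mul_nonpos_of_nonneg_of_nonpos (by positivity) (hK _)
    simp only [Jac, Matrix.of_apply, if_neg this]
    rw [Real.norm_of_nonpos h3]
  rw [e]
  have e2 : Jac (xiMl ζ) (Kml ζ) N n lam i i = xiMl ζ (lam i) - (1 / (N:ℝ)) * ∑ l ∈ Finset.univ.erase i, Kml ζ (lam i - lam l) := by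
    simp [Jac]
  rw [e2]
  refine lt_of_lt_of_le ?_ (le_abs_self _)
  linarith

lemma ml_case (ζ : ℝ) (h0 : 0 < ζ) (hpi : ζ < π) (k : ℕ) (hk : Odd k) :
    ∃ N0 : ℕ, ∀ N n : ℕ, Even N → N0 ≤ N →
            (n : ℝ) ≤ (N : ℝ) / 2 -
              (if -1 < -Real.cos ζ ∧ -Real.cos ζ < 0 then 8 * (k : ℝ) ^ 2 else 0) →
            ∀ (S : Set ℝ) (g : ℝ → ℝ), QDomainMl ζ S g → (∀ x : ℝ, 0 < g x) →
              (∫ t in S, g t) = (n : ℝ) / N →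
              ∀ lam : Fin n → ℝ, Interlaced N n k g lam → StrictOrderedVec lam →
                SymmetricVec lam →
                IsUnit (Jac (xiMl ζ) (Kml ζ) N n lam) := by
  refine ⟨0, fun N n _ _ hn S g hQ hp hint lam hI _ hs => ?_⟩
  rcases le_or_gt (π / 2) ζ with h | h
  · exact ml_big h hpi
  have hc : 0 < Real.cos ζ := Real.cos_pos_of_mem_Ioo ⟨by linarith, h⟩
  have hc1 : Real.cos ζ < 1 := by
    rw [← Real.cos_zero]
    exact Real.cos_lt_cos_of_nonneg_of_le_pi le_rfl hpi.le h0
  rw [if_pos ⟨by linarith, by linarith⟩] at hn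
  rcases hQ with ⟨q, hq, rfl, hB⟩ | ⟨rfl, rfl⟩
  · refine ml_small h0 h hq hk hn hB hp ?_ hI hs
    rw [intervalIntegral.integral_of_le (by linarith), ← integral_Icc_eq_integral_Ioc]
    exact hint
  · exfalso
    have e2 : ∫ x, rhoInf ζ x = 1 / 2 := by
      rw [rhoInf_eq h0, Tk_integral (by linarith) (by linarith)]; field_simp
    rw [Measure.restrict_univ, e2] at hint
    have hk1 : (1:ℝ) ≤ k := by
      have : 1 ≤ k := hk.pos
      exact_mod_cast this
    have hN' : (0:ℝ) < N := by
      have : (0:ℝ) ≤ n := by positivity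
      nlinarith
    rw [eq_div_iff hN'.ne'] at hint
    nlinarith


/-- characters of the unit circle -/
def ee (m : ℤ) (x : ℝ) : ℂ := Complex.exp (((2 * π * m * x : ℝ) : ℂ) * Complex.I)

lemma ee_norm (m : ℤ) (x : ℝ) : ‖ee m x‖ = 1 := Complex.norm_exp_ofReal_mul_I _

lemma ee_cont (m : ℤ) : Continuous (ee m) := by unfold ee; fun_prop

lemma ee_add (m : ℤ) (x y : ℝ) : ee m (x + y) = ee m x * ee m y := by
  unfold ee; rw [← Complex.exp_add]; congr 1; push_cast; ring

lemma ee_one (m : ℤ) : ee m 1 = 1 := by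
  unfold ee
  rw [Complex.exp_eq_one_iff]
  exact ⟨m, by push_cast; ring⟩

lemma ee_per (m : ℤ) (x : ℝ) : ee m (x + 1) = ee m x := by rw [ee_add, ee_one, mul_one]

lemma ee_mul (m n : ℤ) (x : ℝ) : ee m x * ee n x = ee (m + n) x := by
  unfold ee; rw [← Complex.exp_add]; congr 1; push_cast; ring

lemma ee_int (m : ℤ) : ∫ x in (-(1/2):ℝ)..(1/2), ee m x = if m = 0 then 1 else 0 := by
  split_ifs with h
  · subst h
    simp [ee]
    norm_num
  · have hc : (2 * π * m * Complex.I : ℂ) ≠ 0 := by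
      have : (π:ℂ) ≠ 0 := by exact_mod_cast Real.pi_ne_zero
      have : (m:ℂ) ≠ 0 := by exact_mod_cast h
      simp [*]
    have e : ∀ x : ℝ, ee m x = Complex.exp ((2 * π * m * Complex.I) * x) := by
      intro x; unfold ee; congr 1; push_cast; ring
    have h1 : ee m (1/2) = ee m (-(1/2)) := by
      rw [← ee_per m (-(1/2))]; norm_num
    simp_rw [e]
    rw [integral_exp_mul_complex hc, ← e, ← e, h1]; simp

/-- Fourier coefficients -/
def co (f : ℝ → ℝ) (m : ℤ) : ℂ := ∫ x in (-(1/2):ℝ)..(1/2), (f x : ℂ) * ee (-m) x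

/-- periodic convolution -/
def pcv (f g : ℝ → ℝ) (x : ℝ) : ℝ := ∫ s in (-(1/2):ℝ)..(1/2), f s * g (x - s)

lemma per_bdd {g : ℝ → ℝ} (hg : Continuous g) (hp : ∀ x, g (x + 1) = g x) : ∃ C, ∀ x, |g x| ≤ C := by
  have hper : Function.Periodic g 1 := hp
  obtain ⟨C, hC⟩ := (isCompact_Icc (a := (0:ℝ)) (b := 1)).exists_bound_of_continuousOn hg.continuousOn
  refine ⟨C, fun x => ?_⟩
  obtain ⟨y, hy, e⟩ := hper.exists_mem_Ico₀ one_pos x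
  rw [e]
  exact hC y ⟨hy.1, hy.2.le⟩

lemma pcv_cont {f g : ℝ → ℝ} (hf : IntervalIntegrable f volume (-(1/2)) (1/2)) (hg : Continuous g) (hp : ∀ x, g (x + 1) = g x) :
    Continuous (pcv f g) := by
  obtain ⟨C, hC⟩ := per_bdd hg hp
  unfold pcv
  refine intervalIntegral.continuous_of_dominated_interval (bound := fun s => |f s| * C) (fun x => ?_) (fun x => ?_) ?_ ?_
  · have h1 := hf.def'.aestronglyMeasurable
    exact h1.mul (by fun_prop : Continuous fun s => g (x - s)).aestronglyMeasurable
  · refine ae_of_all _ (fun s _ => ?_)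
    rw [Real.norm_eq_abs, abs_mul]
    exact mul_le_mul_of_nonneg_left (hC _) (abs_nonneg _)
  · exact hf.abs.mul_const _
  · exact ae_of_all _ (fun s _ => by fun_prop)

lemma pcv_per {f g : ℝ → ℝ} (hp : ∀ x, g (x + 1) = g x) (x : ℝ) : pcv f g (x + 1) = pcv f g x := by
  unfold pcv
  congr 1; ext s
  rw [show x + 1 - s = (x - s) + 1 by ring, hp]

lemma pcv_nonneg {f g : ℝ → ℝ} (hf : ∀ x, 0 ≤ f x) (hg : ∀ x, 0 ≤ g x) (x : ℝ) : 0 ≤ pcv f g x :=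
  intervalIntegral.integral_nonneg (by norm_num) (fun s _ => mul_nonneg (hf s) (hg _))

lemma co_pcv {f g : ℝ → ℝ} (hf : IntervalIntegrable f volume (-(1/2)) (1/2)) (hg : Continuous g) (hp : ∀ x, g (x + 1) = g x)
    (m : ℤ) : co (pcv f g) m = co f m * co g m := by
  obtain ⟨C, hC⟩ := per_bdd hg hp
  have hle : (-(1/2):ℝ) ≤ 1/2 := by norm_num
  set f1 : ℝ → ℂ := fun s => (f s : ℂ) * ee (-m) s with hf1
  set g1 : ℝ → ℂ := fun s => (g s : ℂ) * ee (-m) s with hg1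
  have hec := ee_cont (-m)
  have hg1c : Continuous g1 := by simp only [hg1]; fun_prop
  have hg1p : Function.Periodic g1 1 := fun x => by simp only [hg1]; rw [hp, ee_per]
  have hf1i : IntegrableOn f1 (Set.Ioc (-(1/2)) (1/2)) := by
    have := (intervalIntegrable_iff_integrableOn_Ioc_of_le hle).1 hf
    refine Integrable.mul_bdd (c := 1) this.ofReal hec.aestronglyMeasurable ?_
    exact ae_of_all _ (fun x => (ee_norm _ _).le)
  have e1 : co (pcv f g) m = ∫ x in (-(1/2):ℝ)..(1/2), ∫ s in (-(1/2):ℝ)..(1/2), f1 s * g1 (x - s) := by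
    unfold co pcv
    congr 1; ext x
    rw [← intervalIntegral.integral_ofReal, ← intervalIntegral.integral_mul_const]
    congr 1; ext s
    simp only [hf1, hg1]
    rw [show ee (-m) x = ee (-m) s * ee (-m) (x - s) by rw [← ee_add]; congr 1; ring]
    push_cast; ring
  have hsw : ∫ x in (-(1/2):ℝ)..(1/2), ∫ s in (-(1/2):ℝ)..(1/2), f1 s * g1 (x - s) =
      ∫ s in (-(1/2):ℝ)..(1/2), ∫ x in (-(1/2):ℝ)..(1/2), f1 s * g1 (x - s) := by
    simp only [intervalIntegral.integral_of_le hle]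
    apply integral_integral_swap
    have h1 : Integrable (fun p : ℝ × ℝ => f1 p.2) ((volume.restrict (Set.Ioc (-(1/2):ℝ) (1/2))).prod (volume.restrict (Set.Ioc (-(1/2):ℝ) (1/2)))) :=
      Integrable.comp_snd hf1i _
    refine Integrable.mul_bdd (c := C) h1 ?_ ?_
    · exact (by fun_prop : Continuous fun p : ℝ × ℝ => g1 (p.1 - p.2)).aestronglyMeasurable
    · refine ae_of_all _ (fun p => ?_)
      simp only [hg1]
      rw [norm_mul, ee_norm, mul_one, Complex.norm_real]; exact hC _
  rw [e1, hsw]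
  have e2 : ∀ s, ∫ x in (-(1/2):ℝ)..(1/2), f1 s * g1 (x - s) = f1 s * co g m := by
    intro s
    rw [intervalIntegral.integral_const_mul, intervalIntegral.integral_comp_sub_right]
    congr 1
    have := hg1p.intervalIntegral_add_eq (-(1/2) - s) (-(1/2))
    rw [show -(1/2) - s + 1 = 1/2 - s by ring, show (-(1/2):ℝ) + 1 = 1/2 by norm_num] at this
    exact this
  simp_rw [e2]
  rw [intervalIntegral.integral_mul_const]
  rfl

lemma co_add {f g : ℝ → ℝ} (hf : IntervalIntegrable f volume (-(1/2)) (1/2)) (hg : IntervalIntegrable g volume (-(1/2)) (1/2)) (m : ℤ) :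
    co (fun x => f x + g x) m = co f m + co g m := by
  have hle : (-(1/2):ℝ) ≤ 1/2 := by norm_num
  have key : ∀ f : ℝ → ℝ, IntervalIntegrable f volume (-(1/2)) (1/2) → IntervalIntegrable (fun x => (f x : ℂ) * ee (-m) x) volume (-(1/2)) (1/2) := by
    intro f hf
    rw [intervalIntegrable_iff_integrableOn_Ioc_of_le hle] at hf ⊢
    refine Integrable.mul_bdd (c := 1) hf.ofReal (ee_cont _).aestronglyMeasurable ?_
    exact ae_of_all _ (fun x => (ee_norm _ _).le)
  unfold co
  rw [← intervalIntegral.integral_add (key f hf) (key g hg)]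
  congr 1; ext x; push_cast; ring

lemma co_inj {f g : ℝ → ℝ} (hf : Continuous f) (hg : Continuous g) (hfp : ∀ x, f (x + 1) = f x)
    (hgp : ∀ x, g (x + 1) = g x) (h : ∀ m, co f m = co g m) (x : ℝ) : f x = g x := by
  set u : ℝ → ℂ := fun x => ((f x - g x : ℝ) : ℂ) with hu
  have hup : Function.Periodic u 1 := fun x => by simp only [hu]; rw [hfp, hgp]
  have huc : Continuous u := by simp only [hu]; fun_prop
  have : Fact ((0:ℝ) < 1) := ⟨one_pos⟩
  let U : C(AddCircle (1:ℝ), ℂ) := ⟨hup.lift, continuous_coinduced_dom.mpr huc⟩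
  have hU : ∀ x : ℝ, U x = u x := fun x => hup.lift_coe x
  have hz : ∀ m, fourierCoeff U m = 0 := by
    intro m
    rw [fourierCoeff_eq_intervalIntegral _ _ (-(1/2))]
    have e : (∫ x in (-(1/2):ℝ)..(-(1/2) + 1), fourier (-m) (x : AddCircle (1:ℝ)) • U x) = co (fun x => f x + - g x) m := by
      unfold co
      rw [show (-(1/2):ℝ) + 1 = 1/2 by norm_num]
      congr 1; ext x
      rw [hU, fourier_coe_apply, smul_eq_mul, mul_comm]
      simp only [hu, ee]
      congr 2
      push_cast; ring
    have e2 : co (fun x => f x + - g x) m = 0 := by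
      rw [co_add (g := fun x => - g x) (hf.intervalIntegrable _ _) (hg.neg.intervalIntegrable _ _), h]
      unfold co
      rw [← intervalIntegral.integral_add]
      · simp
      · have := ee_cont (-m); exact Continuous.intervalIntegrable (by fun_prop) _ _
      · have := ee_cont (-m); exact Continuous.intervalIntegrable (by fun_prop) _ _
    rw [e, e2]; simp
  have hs := has_pointwise_sum_fourier_series_of_summable (f := U) (by
    rw [show fourierCoeff U = fun _ => 0 from funext hz]; exact summable_zero) (x : AddCircle (1:ℝ))
  simp only [hz, zero_smul] at hs
  have h0 := hs.unique hasSum_zero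
  rw [hU] at h0
  simp only [hu] at h0
  have := Complex.ofReal_eq_zero.1 h0
  linarith

lemma series_facts {f : ℝ → ℝ} {a : ℤ → ℝ} (ha : Summable a) (ha0 : ∀ m, 0 ≤ a m)
    (hH : ∀ x, HasSum (fun m : ℤ => (a m : ℂ) * ee m x) (f x : ℂ)) :
    Continuous f ∧ (∀ x, f (x + 1) = f x) ∧ (∀ m, co f m = a m) ∧
      (∀ x, HasSum (fun m : ℤ => a m * Real.cos (2 * π * m * x)) (f x)) := by
  have hnorm : ∀ m x, ‖(a m : ℂ) * ee m x‖ = a m := by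
    intro m x
    rw [norm_mul, ee_norm, mul_one, Complex.norm_real, Real.norm_of_nonneg (ha0 m)]
  refine ⟨?_, ?_, ?_, ?_⟩
  · have h1 : Continuous (fun x => (f x : ℂ)) := by
      have : (fun x => (f x : ℂ)) = fun x => ∑' m : ℤ, (a m : ℂ) * ee m x := by
        ext x; exact (hH x).tsum_eq.symm
      rw [this]
      exact continuous_tsum (fun m => continuous_const.mul (ee_cont m)) ha (fun m x => (hnorm m x).le)
    exact Complex.continuous_re.comp h1
  · intro x
    have h1 := hH (x + 1)
    simp_rw [ee_per] at h1
    exact_mod_cast h1.unique (hH x)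
  · intro m
    have hle : (-(1/2):ℝ) ≤ 1/2 := by norm_num
    set F : ℤ → ℝ → ℂ := fun j x => (a j : ℂ) * ee j x * ee (-m) x with hF
    have hFn : ∀ j x, ‖F j x‖ = a j := by
      intro j x; simp only [hF]; rw [norm_mul, hnorm, ee_norm, mul_one]
    have hFc : ∀ j, Continuous (F j) := fun j => (continuous_const.mul (ee_cont j)).mul (ee_cont _)
    have key := hasSum_integral_of_summable_integral_norm (μ := volume.restrict (Set.Ioc (-(1/2):ℝ) (1/2))) (F := F)
      (fun j => ((hFc j).integrableOn_Icc (a := -(1/2)) (b := 1/2)).mono_set Set.Ioc_subset_Icc_self)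
      (by
        simp_rw [hFn]
        simp
        norm_num
        exact ha)
    have e1 : ∀ j, ∫ x in Set.Ioc (-(1/2):ℝ) (1/2), F j x = if j = m then (a m : ℂ) else 0 := by
      intro j
      rw [← intervalIntegral.integral_of_le hle]
      simp only [hF, mul_assoc, ee_mul]
      rw [intervalIntegral.integral_const_mul, ee_int]
      by_cases h : j = m
      · subst h; simp
      · rw [if_neg h, if_neg (by omega), mul_zero]
    have e2 : ∫ x in Set.Ioc (-(1/2):ℝ) (1/2), ∑' j, F j x = co f m := by
      rw [← intervalIntegral.integral_of_le hle]
      unfold co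
      congr 1; ext x
      exact ((hH x).mul_right _).tsum_eq
    rw [e2] at key
    simp_rw [e1] at key
    exact key.unique (hasSum_ite_eq m _)
  · intro x
    have := Complex.hasSum_re (hH x)
    simp only [Complex.ofReal_re, Complex.re_ofReal_mul] at this
    convert this using 3 with m
    unfold ee
    rw [Complex.exp_ofReal_mul_I_re]


lemma ee_neg (m : ℤ) (x : ℝ) : ee (-m) x = (ee m x)⁻¹ := by
  unfold ee; rw [← Complex.exp_neg]; congr 1; push_cast; ring

lemma ee_nat (m : ℕ) (x : ℝ) : ee m x = (ee 1 x) ^ m := by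
  unfold ee; rw [← Complex.exp_nat_mul]; congr 1; push_cast; ring

lemma summable_exp_int {s : ℝ} (hs : 0 < s) : Summable (fun m : ℤ => Real.exp (-s * |(m:ℝ)|)) := by
  have h : Summable (fun m : ℕ => Real.exp (-s * (m:ℝ))) := by
    have := summable_geometric_of_lt_one (Real.exp_pos (-s)).le ((by rw [← Real.exp_zero]; exact Real.exp_lt_exp.2 (by linarith)))
    convert this using 2 with m
    rw [← Real.exp_nat_mul]; congr 1; ring
  apply Summable.of_nat_of_neg
  · simpa using h
  · simpa using h

/-- Poisson kernel -/
lemma poisson_hasSum {s : ℝ} (hs : 0 < s) (x : ℝ) :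
    HasSum (fun m : ℤ => ((Real.exp (-s * |(m:ℝ)|) : ℝ) : ℂ) * ee m x)
      ((Real.sinh s / (Real.cosh s - Real.cos (2 * π * x)) : ℝ) : ℂ) := by
  set r : ℝ := Real.exp (-s) with hr
  have hr0 : 0 < r := Real.exp_pos _
  have hr1 : r < 1 := (by rw [← Real.exp_zero]; exact Real.exp_lt_exp.2 (by linarith))
  have hw := ee_norm 1 x
  set w := ee 1 x with hwd
  have hw0 : w ≠ 0 := by intro h; rw [h] at hw; simp at hw
  have hn1 : ‖(r:ℂ) * w‖ < 1 := by
    rw [norm_mul, hw, Complex.norm_real, Real.norm_of_nonneg hr0.le]; linarith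
  have hn2 : ‖(r:ℂ) * w⁻¹‖ < 1 := by
    rw [norm_mul, norm_inv, hw, Complex.norm_real, Real.norm_of_nonneg hr0.le]; linarith
  have hpow : ∀ m : ℕ, Real.exp (-s * m) = r ^ m := by
    intro m; rw [hr, ← Real.exp_nat_mul]; congr 1; ring
  have h1 := hasSum_geometric_of_norm_lt_one hn1
  have h2 := (hasSum_geometric_of_norm_lt_one hn2).mul_left ((r:ℂ) * w⁻¹)
  have key := HasSum.of_nat_of_neg_add_one (f := fun m : ℤ => ((Real.exp (-s * |(m:ℝ)|) : ℝ) : ℂ) * ee m x)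
    (m := (1 - (r:ℂ) * w)⁻¹) (m' := (r:ℂ) * w⁻¹ * (1 - (r:ℂ) * w⁻¹)⁻¹) (by
      refine (congrArg (fun F => HasSum F _) (funext fun m => ?_)).mpr h1
      rw [ee_nat]
      simp only [Int.cast_natCast, Nat.abs_cast, hpow]
      rw [mul_pow]; push_cast; rfl) (by
      refine (congrArg (fun F => HasSum F _) (funext fun m => ?_)).mpr h2
      rw [ee_neg, show ((m:ℤ) + 1) = ((m + 1 : ℕ) : ℤ) by push_cast; rfl, ee_nat]
      have : |((-((m+1:ℕ):ℤ) : ℤ):ℝ)| = ((m + 1 : ℕ) : ℝ) := by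
        push_cast; rw [abs_neg, abs_of_nonneg (by positivity)]
      rw [this, hpow, ← pow_succ', mul_pow, inv_pow]; push_cast; rfl)
  convert key using 1
  have hne1 : (1 - (r:ℂ) * w) ≠ 0 := by
    intro h; rw [← sub_eq_zero.1 h] at hn1; simp at hn1
  have hne2 : (1 - (r:ℂ) * w⁻¹) ≠ 0 := by
    intro h; rw [← sub_eq_zero.1 h] at hn2; simp at hn2
  have hcos : ((Real.cos (2 * π * x) : ℝ) : ℂ) = (w + w⁻¹) / 2 := by
    rw [hwd, ← ee_neg]; unfold ee
    rw [Complex.ofReal_cos, Complex.cos]; push_cast; ring_nf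
  have hrc : (r:ℂ) ≠ 0 := by exact_mod_cast hr0.ne'
  have hsr : Real.exp s = r⁻¹ := by rw [hr, Real.exp_neg, inv_inv]
  have hch : ((Real.cosh s : ℝ):ℂ) = ((r:ℂ)⁻¹ + r) / 2 := by
    rw [Real.cosh_eq, hsr, ← hr]; push_cast; rfl
  have hsh : ((Real.sinh s : ℝ):ℂ) = ((r:ℂ)⁻¹ - r) / 2 := by
    rw [Real.sinh_eq, hsr, ← hr]; push_cast; rfl
  have hden : ((r:ℂ)⁻¹ + r) / 2 - (w + w⁻¹) / 2 = (1 - (r:ℂ) * w) * (1 - (r:ℂ) * w⁻¹) / (2 * r) := by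
    field_simp; ring
  rw [Complex.ofReal_div, Complex.ofReal_sub, hcos, hch, hsh, hden]
  generalize hv : w⁻¹ = v at *
  have hwv : w * v = 1 := by rw [← hv]; exact mul_inv_cancel₀ hw0
  field_simp
  linear_combination ((r:ℂ)^2) * hwv

lemma kms_eq {ζ : ℝ} (h : 0 < ζ) (x : ℝ) : π * Kms ζ (π * x) = Real.sinh (2 * ζ) / (Real.cosh (2 * ζ) - Real.cos (2 * π * x)) := by
  have h1 : Real.cosh (2 * ζ) - Real.cos (2 * π * x) = 2 * (Real.sin (π * x) ^ 2 + Real.sinh ζ ^ 2) := by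
    rw [Real.cosh_two_mul, show 2 * π * x = 2 * (π * x) by ring, Real.cos_two_mul, Real.cosh_sq, Real.sin_sq]; ring
  have := Real.pi_pos
  have h2 : 0 < Real.sinh ζ := Real.sinh_pos_iff.2 h
  have h3 : 0 < Real.sin (π * x) ^ 2 + Real.sinh ζ ^ 2 := by positivity
  rw [h1]; unfold Kms; field_simp

lemma xms_eq {ζ : ℝ} (h : 0 < ζ) (x : ℝ) : π * xiMs ζ (π * x) = Real.sinh ζ / (Real.cosh ζ - Real.cos (2 * π * x)) := by
  have h1 : Real.cosh ζ - Real.cos (2 * π * x) = 2 * (Real.sin (π * x) ^ 2 + Real.sinh (ζ/2) ^ 2) := by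
    rw [show ζ = 2 * (ζ / 2) by ring, Real.cosh_two_mul, show 2 * π * x = 2 * (π * x) by ring, Real.cos_two_mul, Real.cosh_sq, Real.sin_sq]; ring_nf
  have := Real.pi_pos
  have h2 : 0 < Real.sinh (ζ/2) := Real.sinh_pos_iff.2 (by linarith)
  have h3 : 0 < Real.sin (π * x) ^ 2 + Real.sinh (ζ/2) ^ 2 := by positivity
  rw [h1]; unfold xiMs; field_simp

lemma kms_facts {ζ : ℝ} (h : 0 < ζ) :
    Continuous (fun x => π * Kms ζ (π * x)) ∧ (∀ x, (fun x => π * Kms ζ (π * x)) (x + 1) = (fun x => π * Kms ζ (π * x)) x) ∧ (∀ m, co (fun x => π * Kms ζ (π * x)) m = ((fun m : ℤ => Real.exp (-(2 * ζ) * |(m:ℝ)|)) m : ℝ)) ∧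
      (∀ x, HasSum (fun m : ℤ => (fun m : ℤ => Real.exp (-(2 * ζ) * |(m:ℝ)|)) m * Real.cos (2 * π * m * x)) ((fun x => π * Kms ζ (π * x)) x)) := series_facts (f := fun x => π * Kms ζ (π * x))
  (summable_exp_int (s := 2 * ζ) (by positivity)) (fun m => (Real.exp_pos _).le)
  (fun x => by simpa only [kms_eq h] using poisson_hasSum (s := 2 * ζ) (by positivity) x)

lemma xms_facts {ζ : ℝ} (h : 0 < ζ) :
    Continuous (fun x => π * xiMs ζ (π * x)) ∧ (∀ x, (fun x => π * xiMs ζ (π * x)) (x + 1) = (fun x => π * xiMs ζ (π * x)) x) ∧ (∀ m, co (fun x => π * xiMs ζ (π * x)) m = ((fun m : ℤ => Real.exp (-ζ * |(m:ℝ)|)) m : ℝ)) ∧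
      (∀ x, HasSum (fun m : ℤ => (fun m : ℤ => Real.exp (-ζ * |(m:ℝ)|)) m * Real.cos (2 * π * m * x)) ((fun x => π * xiMs ζ (π * x)) x)) := series_facts (f := fun x => π * xiMs ζ (π * x))
  (summable_exp_int (s := ζ) (by positivity)) (fun m => (Real.exp_pos _).le)
  (fun x => by simpa only [xms_eq h] using poisson_hasSum (s := ζ) (by positivity) x)

/-- periodised kernel -/
def dd (α β x : ℝ) : ℝ := ∑' n : ℤ, Tk α β (x + n)

lemma dd_summable (hα : 0 < α) (hαβ : α < β) (x : ℝ) : Summable (fun n : ℤ => Tk α β (x + n)) := by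
  obtain ⟨C, hC, hb⟩ := Tk_bound hα hαβ
  have hβ : 0 < β := hα.trans hαβ
  have hpi := Real.pi_pos
  have hs : 0 < π / β := by positivity
  refine Summable.of_nonneg_of_le (fun n => (Tk_pos hα hαβ _).le) (fun n => ?_)
    ((summable_exp_int hs).mul_left (C * Real.exp (π / β * |x|)))
  refine (hb _).trans ?_
  rw [mul_assoc, ← Real.exp_add]
  refine mul_le_mul_of_nonneg_left (Real.exp_le_exp.2 ?_) hC.le
  have : |(n:ℝ)| ≤ |x + n| + |x| := by
    have := abs_sub (x + n) x
    simpa using this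
  nlinarith

lemma dd_hasSum (hα : 0 < α) (hαβ : α < β) (x : ℝ) :
    HasSum (fun m : ℤ => ((Mk α β (2 * π * m) : ℝ) : ℂ) * ee m x) (dd α β x : ℂ) := by
  have hβ : 0 < β := hα.trans hαβ
  have hpi := Real.pi_pos
  have hMs : Summable (fun m : ℤ => Mk α β (2 * π * m)) := by
    refine Summable.of_nonneg_of_le (fun n => (Mk_pos hα hαβ _).le) (fun n => Mk_le hα hαβ _) ?_
    have := summable_exp_int (s := (β - α) * (2 * π)) (mul_pos (sub_pos.2 hαβ) (by positivity))
    convert this using 3 with m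
    rw [abs_mul, abs_of_pos (by positivity : 0 < 2 * π)]; ring
  have hdec : (fun x : ℝ => (Tk α β x : ℂ)) =O[cocompact ℝ] fun x : ℝ => |x| ^ (-(2:ℝ)) := by
    obtain ⟨C, hC, hb⟩ := Tk_bound hα hαβ
    have hs : 0 < π / β := by positivity
    have h1 : Tendsto (fun y : ℝ => y ^ (2:ℝ) * Real.exp (-(π/β) * y)) atTop (nhds 0) :=
      tendsto_rpow_mul_exp_neg_mul_atTop_nhds_zero 2 _ hs
    have h2 : Tendsto (fun x : ℝ => |x|) (cocompact ℝ) atTop := tendsto_norm_cocompact_atTop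
    have h3 := (h1.comp h2).eventually (gt_mem_nhds one_pos)
    refine Asymptotics.IsBigO.of_bound C ?_
    filter_upwards [h3, h2.eventually_gt_atTop 0] with x hx hx0
    simp only [Function.comp] at hx
    rw [Complex.norm_real, Real.norm_of_nonneg (Tk_pos hα hαβ _).le, Real.norm_of_nonneg (by positivity)]
    refine (hb x).trans (mul_le_mul_of_nonneg_left ?_ hC.le)
    rw [Real.rpow_neg hx0.le, ← one_div, le_div_iff₀ (by positivity)]
    linarith
  have hF : ∀ m : ℤ, 𝓕 (fun x : ℝ => (Tk α β x : ℂ)) m = ((Mk α β (2 * π * m) : ℝ) : ℂ) := by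
    intro m; rw [Tk_fourier hα hαβ]
  have hP := Real.tsum_eq_tsum_fourier_of_rpow_decay_of_summable
    (Complex.continuous_ofReal.comp (Tk_continuous hα hαβ)) (b := 2) (by norm_num) hdec
    (by
      have : (fun n : ℤ => 𝓕 (fun x : ℝ => (Tk α β x : ℂ)) n) = fun n : ℤ => ((Mk α β (2 * π * n) : ℝ) : ℂ) := funext hF
      simp only [Function.comp_def]
      rw [this]
      exact_mod_cast hMs) x
  simp only [Function.comp_def, hF] at hP
  rw [← Complex.ofReal_tsum] at hP
  unfold dd
  rw [hP]
  have e : ∀ m : ℤ, ((Mk α β (2 * π * m) : ℝ) : ℂ) * fourier m (x : UnitAddCircle) = ((Mk α β (2 * π * m) : ℝ) : ℂ) * ee m x := by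
    intro m
    rw [fourier_coe_apply]; unfold ee; congr 2; push_cast; ring
  simp_rw [e]
  apply Summable.hasSum
  apply Summable.of_norm
  simp_rw [norm_mul, ee_norm, mul_one, Complex.norm_real, Real.norm_of_nonneg (Mk_pos hα hαβ _).le]
  exact hMs

lemma dd_ge (hα : 0 < α) (hαβ : α < β) (x : ℝ) : Tk α β (1/2) ≤ dd α β x := by
  have h1 := (dd_summable hα hαβ x).le_tsum (-round x) (fun n _ => (Tk_pos hα hαβ _).le)
  refine le_trans (Tk_anti hα hαβ ?_) h1
  have := abs_sub_round x
  rw [abs_of_pos (by norm_num : (0:ℝ) < 1/2)]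
  push_cast
  rwa [← sub_eq_add_neg]

lemma dd_facts (hα : 0 < α) (hαβ : α < β) :
    Continuous (dd α β) ∧ (∀ x, (dd α β) (x + 1) = (dd α β) x) ∧ (∀ m, co (dd α β) m = ((fun m : ℤ => Mk α β (2 * π * m)) m : ℝ)) ∧
      (∀ x, HasSum (fun m : ℤ => (fun m : ℤ => Mk α β (2 * π * m)) m * Real.cos (2 * π * m * x)) ((dd α β) x)) := series_facts (f := dd α β) (a := fun m : ℤ => Mk α β (2 * π * m))
  (by
    have := (dd_hasSum hα hαβ 0).summable
    simp only [ee, mul_zero, Complex.ofReal_zero, zero_mul, Complex.exp_zero, mul_one] at this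
    exact_mod_cast this)
  (fun m => (Mk_pos hα hαβ _).le) (dd_hasSum hα hαβ)


lemma Mk_ms {ζ : ℝ} (h : 0 < ζ) (m : ℤ) :
    (1 + Real.exp (-(2 * ζ) * |(m:ℝ)|)) * Mk (ζ / (2 * π)) (ζ / π) (2 * π * m) = Real.exp (-ζ * |(m:ℝ)|) := by
  have hpi := Real.pi_pos
  by_cases hm : m = 0
  · subst hm
    simp [Mk]
    field_simp; norm_num
  · have hm' : (m:ℝ) ≠ 0 := by exact_mod_cast hm
    unfold Mk
    rw [if_neg (by positivity)]
    rw [show ζ / (2 * π) * (2 * π * m) = ζ * m by field_simp, show ζ / π * (2 * π * m) = 2 * (ζ * m) by field_simp,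
      Real.sinh_two_mul]
    have hs : Real.sinh (ζ * m) ≠ 0 := by
      rw [Real.sinh_ne_zero]; positivity
    have hc : 0 < Real.cosh (ζ * m) := Real.cosh_pos _
    rw [show Real.sinh (ζ * m) / (2 * Real.sinh (ζ * m) * Real.cosh (ζ * m)) = 1 / (2 * Real.cosh (ζ * m)) by field_simp]
    rw [mul_one_div, div_eq_iff (by positivity)]
    have : Real.cosh (ζ * m) = Real.cosh (ζ * |(m:ℝ)|) := by
      rw [← Real.cosh_abs, abs_mul, abs_of_pos h]
    rw [this, Real.cosh_eq]
    have e1 : Real.exp (-ζ * |(m:ℝ)|) * Real.exp (ζ * |(m:ℝ)|) = 1 := by rw [← Real.exp_add]; simp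
    have e2 : Real.exp (-(2 * ζ) * |(m:ℝ)|) = Real.exp (-ζ * |(m:ℝ)|) * Real.exp (-(ζ * |(m:ℝ)|)) := by
      rw [← Real.exp_add]; congr 1; ring
    rw [e2]; linear_combination -e1

lemma Kms_den {ζ : ℝ} (h : 0 < ζ) (x : ℝ) : 0 < Real.sin x ^ 2 + Real.sinh ζ ^ 2 := by
  have h2 : 0 < Real.sinh ζ := Real.sinh_pos_iff.2 h
  positivity

lemma Kms_pos {ζ : ℝ} (h : 0 < ζ) (x : ℝ) : 0 < Kms ζ x := by
  have h2 : 0 < Real.sinh (2 * ζ) := Real.sinh_pos_iff.2 (by linarith)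
  have := Kms_den h x
  have := Real.pi_pos
  unfold Kms; positivity

lemma xiMs_pos {ζ : ℝ} (h : 0 < ζ) (x : ℝ) : 0 < xiMs ζ x := by
  have h2 : 0 < Real.sinh ζ := Real.sinh_pos_iff.2 h
  have := Kms_den (ζ := ζ / 2) (by linarith) x
  have := Real.pi_pos
  unfold xiMs; positivity

lemma Kms_cont {ζ : ℝ} (h : 0 < ζ) : Continuous (Kms ζ) := by
  have hpi := Real.pi_pos
  unfold Kms
  refine Continuous.div (by fun_prop) (by fun_prop) (fun x => ?_)
  have := Kms_den h x; positivity

lemma Kms_per {ζ : ℝ} (x : ℝ) : Kms ζ (x + π) = Kms ζ x := by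
  unfold Kms; rw [Real.sin_add_pi, neg_sq]

lemma xiMs_per {ζ : ℝ} (x : ℝ) : xiMs ζ (x + π) = xiMs ζ x := by
  unfold xiMs; rw [Real.sin_add_pi, neg_sq]

lemma Kms_even {ζ : ℝ} (x : ℝ) : Kms ζ (-x) = Kms ζ x := by
  unfold Kms; rw [Real.sin_neg, neg_sq]

lemma xiMs_even {ζ : ℝ} (x : ℝ) : xiMs ζ (-x) = xiMs ζ x := by
  unfold xiMs; rw [Real.sin_neg, neg_sq]

lemma ms_lower {ζ q : ℝ} {g : ℝ → ℝ} (h : 0 < ζ) (hq : 0 ≤ q) (hq2 : q ≤ π / 2) (hg : IsBEms ζ q g)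
    (hp : ∀ x, 0 < g x) (x : ℝ) : Tk (ζ / (2 * π)) (ζ / π) (1/2) / π ≤ g x := by
  have hpi := Real.pi_pos
  have hα : 0 < ζ / (2 * π) := by positivity
  have hαβ : ζ / (2 * π) < ζ / π := by
    rw [div_lt_div_iff_of_pos_left h (by positivity) hpi]; linarith
  obtain ⟨hgc, hge⟩ := hg
  obtain ⟨kc, kp, kco, -⟩ := kms_facts h
  obtain ⟨xc, xp, xco, -⟩ := xms_facts h
  obtain ⟨dc, dp, dco, -⟩ := dd_facts hα hαβ
  set kk : ℝ → ℝ := fun x => π * Kms ζ (π * x) with hkk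
  set X : ℝ → ℝ := fun x => π * xiMs ζ (π * x) with hX
  set d := dd (ζ / (2 * π)) (ζ / π) with hd
  set pg : ℝ → ℝ := fun x => π * g (π * x) with hpg
  set S : Set ℝ := Set.Ioc (-(q/π)) (q/π) with hS
  have hSm : MeasurableSet S := measurableSet_Ioc
  set pgi : ℝ → ℝ := S.indicator pg with hpgi
  set pgo : ℝ → ℝ := Sᶜ.indicator pg with hpgo
  have hle : (-(1/2):ℝ) ≤ 1/2 := by norm_num
  have pgc : Continuous pg := by simp only [hpg]; fun_prop
  have pgpos : ∀ x, 0 ≤ pg x := fun x => mul_nonneg hpi.le (hp _).le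
  have hgper : ∀ x, g (x + π) = g x := by
    intro x
    have h1 := hge (x + π)
    have h2 := hge x
    simp_rw [show ∀ m, x + π - m = (x - m) + π by intro m; ring, Kms_per] at h1
    rw [xiMs_per] at h1
    linarith
  have pgp : ∀ x, pg (x + 1) = pg x := by
    intro x; simp only [hpg]; rw [mul_add, mul_one, hgper]
  have hii : ∀ T : Set ℝ, MeasurableSet T → IntervalIntegrable (T.indicator pg) volume (-(1/2)) (1/2) := by
    intro T hT
    rw [intervalIntegrable_iff_integrableOn_Ioc_of_le hle]
    have := (pgc.integrableOn_Icc (μ := volume) (a := -(1/2)) (b := 1/2)).mono_set Set.Ioc_subset_Icc_self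
    exact this.indicator hT
  have ipgi := hii S hSm
  have ipgo := hii Sᶜ hSm.compl
  have hsplit : pg = fun x => pgi x + pgo x := by
    ext x; simp only [hpgi, hpgo]
    by_cases hx : x ∈ S <;> simp [hx]
  have hqp : q / π ≤ 1 / 2 := by rw [div_le_iff₀ hpi]; linarith
  have hqp0 : 0 ≤ q / π := by positivity
  have heq : ∀ x, X x = pg x + pcv pgi kk x := by
    intro x
    have h1 := hge (π * x)
    have e1 : pcv pgi kk x = ∫ s in (-(q/π))..(q/π), pg s * kk (x - s) := by
      unfold pcv
      rw [intervalIntegral.integral_of_le hle, intervalIntegral.integral_of_le (by linarith)]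
      have : (fun s => pgi s * kk (x - s)) = S.indicator (fun s => pg s * kk (x - s)) := by
        ext s; simp only [hpgi]; by_cases hs : s ∈ S <;> simp [hs]
      rw [this, setIntegral_indicator hSm]
      congr 2
      rw [Set.inter_eq_right]
      exact Set.Ioc_subset_Ioc (by linarith) hqp
    have e2 : ∫ s in (-(q/π))..(q/π), pg s * kk (x - s) = π * ∫ m in (-q)..q, Kms ζ (π * x - m) * g m := by
      have := intervalIntegral.mul_integral_comp_mul_left (a := -(q/π)) (b := q/π) (f := fun m => Kms ζ (π * x - m) * g m) π
      rw [show π * -(q/π) = -q by field_simp, show π * (q/π) = q by field_simp] at this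
      rw [← this, ← intervalIntegral.integral_const_mul, ← intervalIntegral.integral_const_mul]
      congr 1; ext s
      simp only [hpg, hkk]; rw [mul_sub]; ring
    rw [e1, e2]
    simp only [hX, hpg]
    rw [← h1]; ring
  have pci : Continuous (pcv pgi kk) := pcv_cont ipgi kc kp
  have ca : ∀ m, co X m = co pg m + co pgi m * co kk m := by
    intro m
    rw [← co_pcv ipgi kc kp, ← co_add (pgc.intervalIntegrable _ _) (pci.intervalIntegrable _ _)]
    congr 1; ext x; exact heq x
  have cb : ∀ m, co pg m = co pgi m + co pgo m := by
    intro m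
    rw [← co_add ipgi ipgo, ← hsplit]
  have Fc : Continuous (pcv pgo X) := pcv_cont ipgo xc xp
  have Fi : IntervalIntegrable (pcv pgo X) volume (-(1/2)) (1/2) := Fc.intervalIntegrable _ _
  have Wc : Continuous (pcv (pcv pgo X) d) := pcv_cont Fi dc dp
  have key : ∀ x, pg x = d x + pcv (pcv pgo X) d x := by
    refine co_inj pgc (dc.add Wc) pgp (fun x => by rw [dp, pcv_per dp]) (fun m => ?_)
    rw [co_add (dc.intervalIntegrable _ _) (Wc.intervalIntegrable _ _), co_pcv Fi dc dp, co_pcv ipgo xc xp]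
    have h1 := ca m
    have h2 := cb m
    rw [kco, xco] at h1
    rw [xco, dco]
    have h3 := congrArg (fun r : ℝ => (r:ℂ)) (Mk_ms h m)
    have h4 : Real.exp (-(2 * ζ) * |(m:ℝ)|) = Real.exp (-ζ * |(m:ℝ)|) ^ 2 := by
      rw [← Real.exp_nat_mul]; congr 1; push_cast; ring
    have hne : (1 + Real.exp (-ζ * |(m:ℝ)|) ^ 2) ≠ 0 := by positivity
    have hneC : (1 + ((Real.exp (-ζ * |(m:ℝ)|) : ℝ):ℂ) ^ 2) ≠ 0 := by exact_mod_cast hne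
    simp only [h4] at h1 h3
    set E : ℝ := Real.exp (-ζ * |(m:ℝ)|) with hE
    simp only [Complex.ofReal_mul, Complex.ofReal_add, Complex.ofReal_pow, Complex.ofReal_one] at h1 h3
    apply mul_left_cancel₀ hneC
    linear_combination (-1 : ℂ) * h1 + (E:ℂ)^2 * h2 - (1 + co pgo m * E) * h3
  have hx := key (x / π)
  have hW : 0 ≤ pcv (pcv pgo X) d (x / π) := by
    refine pcv_nonneg (fun y => pcv_nonneg (fun z => ?_) (fun z => ?_) y) (fun y => ?_) _
    · exact Set.indicator_nonneg (fun z _ => pgpos z) z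
    · exact mul_nonneg hpi.le (xiMs_pos h _).le
    · exact (Tk_pos hα hαβ _).le.trans (dd_ge hα hαβ y)
  have hd1 := dd_ge hα hαβ (x / π)
  rw [div_le_iff₀ hpi]
  simp only [hpg] at hx
  rw [mul_div_cancel₀ _ hpi.ne'] at hx
  linarith

lemma Kms_psd {ζ : ℝ} (h : 0 < ζ) {n : ℕ} (c lam : Fin n → ℝ) :
    0 ≤ ∑ i, ∑ j, c i * c j * Kms ζ (lam i - lam j) := by
  have hpi := Real.pi_pos
  obtain ⟨-, -, -, hs⟩ := kms_facts h
  have hs' : ∀ x, HasSum (fun m : ℤ => Real.exp (-(2 * ζ) * |(m:ℝ)|) * Real.cos (2 * m * x)) (π * Kms ζ x) := by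
    intro x
    have := hs (x / π)
    simp only [mul_div_cancel₀ _ hpi.ne'] at this
    convert this using 4 with m
    field_simp
  have h1 : HasSum (fun m : ℤ => ∑ i, ∑ j, c i * c j * (Real.exp (-(2 * ζ) * |(m:ℝ)|) * Real.cos (2 * m * (lam i - lam j))))
      (∑ i, ∑ j, c i * c j * (π * Kms ζ (lam i - lam j))) :=
    hasSum_sum (fun i _ => hasSum_sum (fun j _ => (hs' _).mul_left _))
  have h2 := h1.nonneg (fun m => by
    have := mul_nonneg (Real.exp_pos (-(2 * ζ) * |(m:ℝ)|)).le (psd_cos c lam (2 * m))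
    rw [Finset.mul_sum] at this
    simp_rw [Finset.mul_sum] at this
    refine this.trans_eq ?_
    refine Finset.sum_congr rfl fun i _ => Finset.sum_congr rfl fun j _ => by ring)
  have h3 : ∑ i, ∑ j, c i * c j * (π * Kms ζ (lam i - lam j)) = π * ∑ i, ∑ j, c i * c j * Kms ζ (lam i - lam j) := by
    rw [Finset.mul_sum]
    simp_rw [Finset.mul_sum]
    refine Finset.sum_congr rfl fun i _ => Finset.sum_congr rfl fun j _ => by ring
  rw [h3] at h2
  exact nonneg_of_mul_nonneg_right h2 hpi

lemma Kms_int_le {ζ q : ℝ} (h : 0 < ζ) (hq : 0 ≤ q) (hq2 : q ≤ π / 2) (x : ℝ) :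
    ∫ m in (-q)..q, Kms ζ (x - m) ≤ 1 := by
  have hpi := Real.pi_pos
  obtain ⟨-, -, hco, -⟩ := kms_facts h
  have h0 := hco 0
  have e0 : ∀ x, ee 0 x = 1 := by intro x; simp [ee]
  have h1 : ∫ s in (-(1/2):ℝ)..(1/2), π * Kms ζ (π * s) = 1 := by
    unfold co at h0
    simp only [neg_zero, e0, mul_one, Int.cast_zero, abs_zero, mul_zero, Real.exp_zero] at h0
    rw [intervalIntegral.integral_ofReal] at h0
    exact_mod_cast h0
  rw [intervalIntegral.integral_const_mul, intervalIntegral.mul_integral_comp_mul_left] at h1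
  have hc := Kms_cont h
  have hper : Function.Periodic (Kms ζ) π := Kms_per
  have h2 : ∫ m in (-(π/2))..(π/2), Kms ζ (x - m) = 1 := by
    rw [intervalIntegral.integral_comp_sub_left]
    have := hper.intervalIntegral_add_eq (x - π/2) (π * -(1/2))
    rw [show x - π/2 + π = x - -(π/2) by ring, show π * -(1/2) + π = π * (1/2) by ring] at this
    rw [this, h1]
  rw [← h2]
  refine intervalIntegral.integral_mono_interval (by linarith) (by linarith) hq2 ?_ ?_
  · exact ae_of_all _ (fun m => (Kms_pos h _).le)
  · exact Continuous.intervalIntegrable (by fun_prop) _ _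


lemma Kms_lip {ζ : ℝ} (h : 0 < ζ) : ∃ L, 0 < L ∧ ∀ x y, |Kms ζ x - Kms ζ y| ≤ L * |x - y| := by
  have hpi := Real.pi_pos
  have h2 : 0 < Real.sinh (2 * ζ) := Real.sinh_pos_iff.2 (by linarith)
  have h1 : 0 < Real.sinh ζ := Real.sinh_pos_iff.2 h
  refine ⟨Real.sinh (2 * ζ) / (2 * π) / (Real.sinh ζ ^ 2 * Real.sinh ζ ^ 2), by positivity, fun x y => ?_⟩
  have hx := Kms_den h x
  have hy := Kms_den h y
  have e : Kms ζ x - Kms ζ y = Real.sinh (2 * ζ) / (2 * π) *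
      (-(Real.sin (x + y) * Real.sin (x - y)) / ((Real.sin x ^ 2 + Real.sinh ζ ^ 2) * (Real.sin y ^ 2 + Real.sinh ζ ^ 2))) := by
    have : Real.sin (x + y) * Real.sin (x - y) = Real.sin x ^ 2 - Real.sin y ^ 2 := by
      rw [Real.sin_add, Real.sin_sub]
      have := Real.sin_sq_add_cos_sq x
      have := Real.sin_sq_add_cos_sq y
      linear_combination (Real.sin x)^2 * this - (Real.sin y)^2 * Real.sin_sq_add_cos_sq x
    rw [this]; unfold Kms; field_simp; ring
  rw [e, abs_mul, abs_of_pos (by positivity : 0 < Real.sinh (2 * ζ) / (2 * π)), abs_div, abs_neg, abs_mul, abs_of_pos (a := _ * _) (mul_pos hx hy)]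
  rw [div_mul_eq_mul_div (Real.sinh (2 * ζ) / (2 * π)), mul_div_assoc (Real.sinh (2 * ζ) / (2 * π)) |x - y|]
  refine mul_le_mul_of_nonneg_left ?_ (by positivity : 0 ≤ Real.sinh (2 * ζ) / (2 * π))
  have a1 := Real.abs_sin_le_one (x + y)
  have a2 : |Real.sin (x - y)| ≤ |x - y| := Real.abs_sin_le_abs
  refine div_le_div₀ (abs_nonneg _) ?_ (by positivity) ?_
  · calc _ ≤ 1 * |x - y| := mul_le_mul a1 a2 (abs_nonneg _) (by norm_num)
      _ = _ := one_mul _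
  · exact mul_le_mul (by nlinarith [sq_nonneg (Real.sin x)]) (by nlinarith [sq_nonneg (Real.sin y)]) (by positivity) hx.le

lemma ms_case (ζ : ℝ) (h : 0 < ζ) (k : ℕ) (hk : Odd k) :
    ∃ N0 : ℕ, ∀ N n : ℕ, Even N → N0 ≤ N → 2 * n ≤ N →
            ∀ (q : ℝ) (g : ℝ → ℝ), 0 ≤ q → q ≤ π / 2 → IsBEms ζ q g →
              (∀ x : ℝ, 0 < g x) → (∫ t in (-q)..q, g t) = (n : ℝ) / N →
              ∀ lam : Fin n → ℝ, Interlaced N n k g lam → StrictOrderedVec lam →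
                SymmetricVec lam →
                IsUnit (Jac (xiMs ζ) (Kms ζ) N n lam) := by
  have hpi := Real.pi_pos
  have hα : 0 < ζ / (2 * π) := by positivity
  have hαβ : ζ / (2 * π) < ζ / π := by
    rw [div_lt_div_iff_of_pos_left h (by positivity) hpi]; linarith
  obtain ⟨m, hm⟩ : ∃ m, k + 1 = 2 * m := by
    obtain ⟨j, rfl⟩ := hk; exact ⟨j + 1, by ring⟩
  obtain ⟨L, hL, hLip⟩ := Kms_lip h
  have hKc := Kms_cont h
  obtain ⟨M, hM⟩ : ∃ M, ∀ x, Kms ζ x ≤ M := by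
    obtain ⟨kc, kp, -, -⟩ := kms_facts h
    obtain ⟨C, hC⟩ := per_bdd kc kp
    refine ⟨C / π, fun x => ?_⟩
    have := (le_abs_self _).trans (hC (x / π))
    simp only [mul_div_cancel₀ _ hpi.ne'] at this
    rw [le_div_iff₀ hpi]; linarith
  have hM0 : 0 < M := (Kms_pos h 0).trans_le (hM 0)
  set c := Tk (ζ / (2 * π)) (ζ / π) (1/2) / π with hc
  have hc0 : 0 < c := div_pos (Tk_pos hα hαβ _) hpi
  set b := max (π / 2) ((1 + k) / c) with hb
  have hb0 : 0 < b := lt_max_of_lt_left (by positivity)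
  obtain ⟨N1, hN1⟩ := exists_nat_gt (m * (M + 4 * L * b) / c)
  refine ⟨N1 + 1, fun N n _ hN hn q g hq hq2 hg hp hint lam hI _ hsym => ?_⟩
  have hN0 : 0 < N := by omega
  have hN' : (0:ℝ) < N := by exact_mod_cast hN0
  have hNN : (N1:ℝ) ≤ N := by exact_mod_cast (by omega : N1 ≤ N)
  have hlow := ms_lower h hq hq2 hg hp
  have hgc := hg.1
  have hev := even_of_eq hKc (Kms_pos h) hq (Kms_int_le h hq hq2) hgc Kms_even xiMs_even hg.2
  have hlam : ∀ i, |lam i| ≤ b := by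
    intro i
    have h1 := GG_abs_le hN0 hev hI i
    have h2 : c * |lam i| ≤ GG g |lam i| := by
      unfold GG
      have : ∫ t in (0:ℝ)..|lam i|, c = |lam i| * c := by simp
      rw [mul_comm, ← this]
      exact intervalIntegral.integral_mono_on (abs_nonneg _) (by simp) (hgc.intervalIntegrable _ _) (fun t _ => hlow t)
    have h3 : ((n:ℝ) + k) / (2 * N) ≤ 1 + k := by
      rw [div_le_iff₀ (by positivity)]
      have : (2:ℝ) * n ≤ N := by exact_mod_cast hn
      have : (1:ℝ) ≤ N := by exact_mod_cast hN0
      have : (0:ℝ) ≤ k := by positivity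
      nlinarith
    refine le_trans ?_ (le_max_right _ _)
    rw [le_div_iff₀ hc0]; linarith
  have hqb : q ≤ b := hq2.trans (le_max_left _ _)
  apply jac_isUnit (Kms_psd h · lam)
  intro i
  set x := lam i
  have hA := mono_bound (A := fun t => Kms ζ (x - t) + L * t) (lo := -(L * b)) (hi := M + L * b) hgc hp hev hq hN0 hint hm hI
    (by
      intro s t hst
      have := (abs_le.1 (hLip (x - s) (x - t))).2
      rw [show x - s - (x - t) = t - s by ring, abs_of_nonneg (by linarith)] at this
      simp only
      linarith)
    (by fun_prop) (by nlinarith [mul_pos hL hb0])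
    (fun t ht => by
      have := Kms_pos h (x - t)
      have := mul_le_mul_of_nonneg_left (by linarith [ht.1] : -b ≤ t) hL.le
      linarith)
    (fun j => by
      have := hM (x - lam j)
      have := mul_le_mul_of_nonneg_left ((le_abs_self _).trans (hlam j)) hL.le
      linarith)
  have hB := anti_bound (A := fun t => -(L * t)) (lo := -(L * b)) (hi := L * b) hgc hp hev hq hN0 hint hm hI hsym
    (by
      intro s t hst
      have := mul_le_mul_of_nonneg_left hst hL.le
      linarith)
    (by fun_prop) (by nlinarith [mul_pos hL hb0])
    (fun t ht => by
      have := mul_le_mul_of_nonneg_left (ht.2.trans hqb) hL.le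
      linarith)
    (fun j => by
      have := mul_le_mul_of_nonneg_left ((neg_le_abs _).trans (hlam j)) hL.le
      linarith)
  have e1 : (1 / (N:ℝ)) * ∑ j, (Kms ζ (x - lam j) + L * lam j) + (1 / (N:ℝ)) * ∑ j, -(L * lam j) = (1 / (N:ℝ)) * ∑ j, Kms ζ (x - lam j) := by
    rw [← mul_add, ← Finset.sum_add_distrib]; simp
  have e2 : (∫ t in (-q)..q, (Kms ζ (x - t) + L * t) * g t) + (∫ t in (-q)..q, -(L * t) * g t) = ∫ t in (-q)..q, Kms ζ (x - t) * g t := by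
    rw [← intervalIntegral.integral_add (Continuous.intervalIntegrable (by fun_prop) _ _) (Continuous.intervalIntegrable (by fun_prop) _ _)]
    congr 1; ext t; ring
  have e3 := hg.2 x
  have e4 := hlow x
  have e5 : m * (M + L * b - -(L * b)) / N + m * (L * b - -(L * b)) / N < c := by
    rw [← add_div, div_lt_iff₀ hN']
    rw [div_lt_iff₀ hc0] at hN1
    nlinarith
  linarith


end Helpers

/-- **Invertibility of the Bethe Jacobian at interlaced vectors**
(Proposition 3.1): there is an absolute constant `C > 0` such that, in each regime,
for the smallest odd `k` exceeding the relevant threshold, for all `N` large enough,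
all `n ≤ N/2 - Ck²·𝟙_{-1<Δ<0}` (resp. `n ≤ N/2`), every `𝔮` with
`∫_{-𝔮}^{𝔮} ρ(λ|𝔮)dλ = n/N` and every `(k,𝔮)`-interlaced, strictly ordered,
symmetric `λ`, the Jacobian is invertible. -/
theorem bethe_jacobian_invertible :
    ∃ C : ℝ, 0 < C ∧
      -- regime `-1 < Δ < 1`, `Δ = -cos ζ`
      ((∀ ζ : ℝ, 0 < ζ → ζ < π →
        ∀ k : ℕ, Odd k → 0 < k →
          2 * π * k / ((k : ℝ) + 1) > |2 * π - 4 * ζ| →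
          (∀ k' : ℕ, k' < k → Odd k' → 0 < k' →
            ¬(2 * π * k' / ((k' : ℝ) + 1) > |2 * π - 4 * ζ|)) →
          ∃ N0 : ℕ, ∀ N n : ℕ, Even N → N0 ≤ N →
            (n : ℝ) ≤ (N : ℝ) / 2 -
              (if -1 < -Real.cos ζ ∧ -Real.cos ζ < 0 then C * (k : ℝ) ^ 2 else 0) →
            ∀ (S : Set ℝ) (g : ℝ → ℝ), QDomainMl ζ S g → (∀ x : ℝ, 0 < g x) →
              (∫ t in S, g t) = (n : ℝ) / N →
              ∀ lam : Fin n → ℝ, Interlaced N n k g lam → StrictOrderedVec lam →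
                SymmetricVec lam →
                IsUnit (Jac (xiMl ζ) (Kml ζ) N n lam)) ∧
      -- regime `Δ < -1`, `Δ = -cosh ζ`
      (∀ ζ : ℝ, 0 < ζ →
        ∀ s : ℝ, IsLUB (Set.range fun l : ℝ => |phiMs ζ l|) s →
        ∀ k : ℕ, Odd k → 0 < k →
          2 * π * k / ((k : ℝ) + 1) > s →
          (∀ k' : ℕ, k' < k → Odd k' → 0 < k' → ¬(2 * π * k' / ((k' : ℝ) + 1) > s)) →
          ∃ N0 : ℕ, ∀ N n : ℕ, Even N → N0 ≤ N → 2 * n ≤ N →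
            ∀ (q : ℝ) (g : ℝ → ℝ), 0 ≤ q → q ≤ π / 2 → IsBEms ζ q g →
              (∀ x : ℝ, 0 < g x) → (∫ t in (-q)..q, g t) = (n : ℝ) / N →
              ∀ lam : Fin n → ℝ, Interlaced N n k g lam → StrictOrderedVec lam →
                SymmetricVec lam →
                IsUnit (Jac (xiMs ζ) (Kms ζ) N n lam))) := by
  exact ⟨8, by norm_num, fun ζ h0 h1 k hk _ _ _ => ml_case ζ h0 h1 k hk,
    fun ζ h0 _ _ k hk _ _ _ => ms_case ζ h0 k hk⟩

end BetheSix
end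
end

section
/- Let ζ ∈ [π/2, π) (equivalently 0 ≤ Δ < 1), let N ≥ 1 and n ≥ 1 be integers, and let λ = (λ₁,…,λ_n) ∈ ℝⁿ be arbitrary. Then the symmetric n×n matrix J with entries J_{ii} = ξ(λ_i) − (1/N)·Σ_{ℓ≠i} K(λ_i−λ_ℓ) and J_{ij} = (1/N)·K(λ_i−λ_j) for i ≠ j is positive definite. -/
open MeasureTheory Filter
open scoped Real BigOperators

noncomputable section

namespace BetheSix

lemma Kml_nonpos (ζ : ℝ) (h1 : π / 2 ≤ ζ) (h2 : ζ < π) (x : ℝ) : Kml ζ x ≤ 0 := by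
  unfold Kml
  have hpi := Real.pi_pos
  apply div_nonpos_of_nonpos_of_nonneg
  · rw [Real.sin_two_mul]
    have hs : 0 < Real.sin ζ := Real.sin_pos_of_pos_of_lt_pi (by linarith) h2
    have hc : Real.cos ζ ≤ 0 := Real.cos_nonpos_of_pi_div_two_le_of_le h1 (by linarith)
    nlinarith
  · positivity

lemma Kml_even (ζ x y : ℝ) : Kml ζ (x - y) = Kml ζ (y - x) := by
  unfold Kml
  rw [← neg_sub y x, Real.sinh_neg, neg_sq]

lemma xiMl_pos (ζ : ℝ) (h1 : π / 2 ≤ ζ) (h2 : ζ < π) (x : ℝ) : 0 < xiMl ζ x := by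
  unfold xiMl
  have hpi := Real.pi_pos
  have hs : 0 < Real.sin ζ := Real.sin_pos_of_pos_of_lt_pi (by linarith) h2
  have hs2 : 0 < Real.sin (ζ / 2) := Real.sin_pos_of_pos_of_lt_pi (by linarith) (by linarith)
  positivity

/-- **Positive definiteness of the Bethe Jacobian for `0 ≤ Δ < 1`**
(Section 3.1): for `ζ ∈ [π/2, π)`, any `N, n ≥ 1` and an arbitrary vector
`λ ∈ ℝⁿ`, the Jacobian of the logarithmic Bethe equations is positive definite. -/
theorem bethe_jacobian_posdef (ζ : ℝ) (h1 : π / 2 ≤ ζ) (h2 : ζ < π)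
    (N n : ℕ) (hN : 1 ≤ N) (hn : 1 ≤ n) (lam : Fin n → ℝ) :
    (Jac (xiMl ζ) (Kml ζ) N n lam).PosDef := by
  apply Matrix.PosDef.of_dotProduct_mulVec_pos
  · ext i j
    simp only [Matrix.conjTranspose_apply, Jac, Matrix.of_apply, star_trivial]
    by_cases h : i = j
    · subst h; rfl
    · rw [if_neg h, if_neg (Ne.symm h), Kml_even]
  · intro x hx
    have key : star x ⬝ᵥ (Jac (xiMl ζ) (Kml ζ) N n lam).mulVec x
        = ∑ i, xiMl ζ (lam i) * x i ^ 2
          + ∑ i, ∑ j, (-(1 / (N : ℝ)) * Kml ζ (lam i - lam j)) * (x i ^ 2 - x i * x j) := by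
      rw [← Finset.sum_add_distrib]
      simp only [dotProduct, Matrix.mulVec, star_trivial]
      apply Finset.sum_congr rfl
      intro i _
      rw [← Finset.add_sum_erase _ _ (Finset.mem_univ i),
        ← Finset.add_sum_erase Finset.univ
          (fun j => (-(1 / (N : ℝ)) * Kml ζ (lam i - lam j)) * (x i ^ 2 - x i * x j))
          (Finset.mem_univ i)]
      have e : ∑ j ∈ Finset.univ.erase i, Jac (xiMl ζ) (Kml ζ) N n lam i j * x j
          = ∑ j ∈ Finset.univ.erase i, (1 / (N : ℝ)) * Kml ζ (lam i - lam j) * x j := by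
        apply Finset.sum_congr rfl
        intro j hj
        simp only [Jac, Matrix.of_apply]
        rw [if_neg (Ne.symm (Finset.ne_of_mem_erase hj))]
      have e2 : ∑ j ∈ Finset.univ.erase i,
            (-(1 / (N : ℝ)) * Kml ζ (lam i - lam j)) * (x i ^ 2 - x i * x j)
          = -(1 / (N : ℝ)) * (∑ j ∈ Finset.univ.erase i, Kml ζ (lam i - lam j)) * x i ^ 2
            + x i * ∑ j ∈ Finset.univ.erase i, (1 / (N : ℝ)) * Kml ζ (lam i - lam j) * x j := by
        rw [Finset.mul_sum, Finset.sum_mul, Finset.mul_sum, ← Finset.sum_add_distrib]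
        apply Finset.sum_congr rfl
        intro j _
        ring
      rw [e, e2]
      simp only [Jac, Matrix.of_apply, if_true]
      ring
    have sym : 2 * ∑ i, ∑ j, (-(1 / (N : ℝ)) * Kml ζ (lam i - lam j)) * (x i ^ 2 - x i * x j)
        = ∑ i, ∑ j, (-(1 / (N : ℝ)) * Kml ζ (lam i - lam j)) * (x i - x j) ^ 2 := by
      rw [two_mul]
      nth_rewrite 2 [Finset.sum_comm]
      rw [← Finset.sum_add_distrib]
      apply Finset.sum_congr rfl
      intro i _
      rw [← Finset.sum_add_distrib]
      apply Finset.sum_congr rfl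
      intro j _
      rw [Kml_even ζ (lam j) (lam i)]
      ring
    have nn : 0 ≤ ∑ i, ∑ j, (-(1 / (N : ℝ)) * Kml ζ (lam i - lam j)) * (x i - x j) ^ 2 := by
      apply Finset.sum_nonneg
      intro i _
      apply Finset.sum_nonneg
      intro j _
      have hK := Kml_nonpos ζ h1 h2 (lam i - lam j)
      have hNN : (0 : ℝ) ≤ 1 / (N : ℝ) := by positivity
      exact mul_nonneg (mul_nonneg_of_nonpos_of_nonpos (by linarith) hK) (sq_nonneg _)
    have pos : 0 < ∑ i, xiMl ζ (lam i) * x i ^ 2 := by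
      obtain ⟨i, hi⟩ := Function.ne_iff.mp hx
      apply Finset.sum_pos'
      · intro j _
        exact mul_nonneg (xiMl_pos ζ h1 h2 _).le (sq_nonneg _)
      · refine ⟨i, Finset.mem_univ i, mul_pos (xiMl_pos ζ h1 h2 _) ?_⟩
        exact sq_pos_of_ne_zero hi
    rw [key]
    linarith

end BetheSix
end
end

section
/- For every ζ ∈ (0,π) and every q ∈ [0,∞), the linear integral equation g(λ) + ∫_{−q}^{q} K(λ−μ)g(μ)dμ = ξ(λ) for all λ ∈ ℝ, with K(x) := sin(2ζ)/(2π(sinh²(x)+sin²(ζ))) and ξ(x) := sin(ζ)/(2π(sinh²(x)+sin²(ζ/2))), has a unique solution g = ρ(·|q) in L¹(ℝ)∩L^∞(ℝ). Moreover, for every m ∈ [0,1/2) there exists q ∈ [0,∞) with ∫_{−q}^{q} ρ(λ|q)dλ = m. -/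
open MeasureTheory Filter
open scoped Real BigOperators

noncomputable section

namespace BetheSix


/-! ### Abstract part: convolution equations with an `L¹`-contracting kernel -/

lemma conv_facts {K h : ℝ → ℝ} (hK : Integrable K) (hh : Integrable h) :
    Integrable (fun l => ∫ m, K (l - m) * h m) ∧
    (∫ l, ∫ m, K (l - m) * h m) = (∫ x, K x) * ∫ x, h x := by
  have e : (fun l => ∫ m, K (l - m) * h m)
      = convolution h K (ContinuousLinearMap.mul ℝ ℝ) volume := by
    funext l
    simp only [convolution, ContinuousLinearMap.mul_apply']
    exact integral_congr_ae (Eventually.of_forall fun m => mul_comm _ _)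
  constructor
  · rw [e]; exact hh.integrable_convolution _ hK
  · rw [e, integral_convolution (L := ContinuousLinearMap.mul ℝ ℝ) hh hK]
    simp [mul_comm]

lemma conv_bound {K h : ℝ → ℝ} (hK : Integrable K) (hh : Integrable h) :
    (∫ l, |∫ m, K (l - m) * h m|) ≤ (∫ x, |K x|) * ∫ x, |h x| := by
  have h2 := conv_facts hK.abs hh.abs
  rw [← h2.2]
  refine integral_mono (conv_facts hK hh).1.abs h2.1 fun l => ?_
  refine (abs_integral_le_integral_abs).trans (le_of_eq ?_)
  exact integral_congr_ae (Eventually.of_forall fun m => abs_mul _ _)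

lemma conv_integrand {K h : ℝ → ℝ} (hKc : Continuous K) {B : ℝ} (hB : ∀ x, |K x| ≤ B)
    (hh : Integrable h) (l : ℝ) : Integrable (fun m => K (l - m) * h m) := by
  refine hh.bdd_mul (c := B) ?_ ?_
  · exact (hKc.comp (continuous_const.sub continuous_id)).aestronglyMeasurable
  · exact Eventually.of_forall fun x => by simpa using hB _

def Sol (K xi : ℝ → ℝ) (S : Set ℝ) (g : ℝ → ℝ) : Prop :=
  Integrable g ∧ ∀ l, g l + ∫ m, K (l - m) * S.indicator g m = xi l

lemma sol_diff {K xi : ℝ → ℝ} (hKc : Continuous K) {B : ℝ} (hB : ∀ x, |K x| ≤ B)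
    {S T : Set ℝ} (hS : MeasurableSet S) (hT : MeasurableSet T) {g f : ℝ → ℝ}
    (hg : Sol K xi S g) (hf : Sol K xi T f) (l : ℝ) :
    g l - f l = ∫ m, K (l - m) * (T.indicator f m - S.indicator g m) := by
  have h1 := hg.2 l
  have h2 := hf.2 l
  have : (∫ m, K (l - m) * (T.indicator f m - S.indicator g m))
      = (∫ m, K (l - m) * T.indicator f m) - ∫ m, K (l - m) * S.indicator g m := by
    rw [← integral_sub (conv_integrand hKc hB (hf.1.indicator hT) l)
      (conv_integrand hKc hB (hg.1.indicator hS) l)]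
    simp only [mul_sub]
  rw [this]; linarith

lemma sol_stab {K xi : ℝ → ℝ} (hK : Integrable K) (hKc : Continuous K) {B : ℝ}
    (hB : ∀ x, |K x| ≤ B) (hk : (∫ x, |K x|) < 1)
    {S T : Set ℝ} (hS : MeasurableSet S) (hT : MeasurableSet T) {g f : ℝ → ℝ}
    (hg : Sol K xi S g) (hf : Sol K xi T f) :
    (∫ x, |T.indicator f x - S.indicator g x|) ≤
      (1 - ∫ x, |K x|)⁻¹ * ∫ x, |T.indicator f x - S.indicator f x| := by
  have hd : Integrable (fun x => T.indicator f x - S.indicator g x) :=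
    (hf.1.indicator hT).sub (hg.1.indicator hS)
  have he : Integrable (fun x => T.indicator f x - S.indicator f x) :=
    (hf.1.indicator hT).sub (hf.1.indicator hS)
  have h1 : (∫ x, |g x - f x|) ≤
      (∫ x, |K x|) * ∫ x, |T.indicator f x - S.indicator g x| := by
    refine le_trans (le_of_eq ?_) (conv_bound hK hd)
    simp only [sol_diff hKc hB hS hT hg hf]
  have h2 : (∫ x, |T.indicator f x - S.indicator g x|) ≤
      (∫ x, |T.indicator f x - S.indicator f x|) + ∫ x, |g x - f x| := by
    have hgf : Integrable (fun x => |g x - f x|) := (hg.1.sub hf.1).abs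
    rw [← integral_add he.abs hgf]
    refine integral_mono hd.abs (he.abs.add hgf) fun x => ?_
    simp only [Pi.add_apply]
    by_cases hx : x ∈ S
    · simp only [Set.indicator_of_mem hx]
      have := abs_sub_le (T.indicator f x) (f x) (g x)
      rwa [abs_sub_comm (f x) (g x)] at this
    · simp only [Set.indicator_of_notMem hx]
      have := abs_nonneg (g x - f x)
      linarith
  rw [inv_mul_eq_div, le_div_iff₀ (by linarith)]
  linarith

lemma sol_unique {K xi : ℝ → ℝ} (hK : Integrable K) (hKc : Continuous K) {B : ℝ}
    (hB : ∀ x, |K x| ≤ B) (hk : (∫ x, |K x|) < 1)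
    {S : Set ℝ} (hS : MeasurableSet S) {g f : ℝ → ℝ}
    (hg : Sol K xi S g) (hf : Sol K xi S f) : g = f := by
  have hd : Integrable (fun x => S.indicator f x - S.indicator g x) :=
    (hf.1.indicator hS).sub (hg.1.indicator hS)
  have h1 := sol_stab hK hKc hB hk hS hS hg hf
  simp only [sub_self, abs_zero, integral_zero, mul_zero] at h1
  have h2 := (integral_eq_zero_iff_of_nonneg (fun x => abs_nonneg _) hd.abs).1
    (le_antisymm h1 (integral_nonneg fun x => abs_nonneg _))
  funext l
  have h3 := sol_diff hKc hB hS hS hg hf l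
  rw [integral_eq_zero_of_ae] at h3
  · linarith
  · filter_upwards [h2] with m hm
    have : S.indicator f m - S.indicator g m = 0 := by simpa using hm
    simp [this]

lemma sol_tendsto {K xi : ℝ → ℝ} (hK : Integrable K) (hKc : Continuous K) {B : ℝ}
    (hB : ∀ x, |K x| ≤ B) (hk : (∫ x, |K x|) < 1)
    {S : ℝ → Set ℝ} {T : Set ℝ} (hS : ∀ q, MeasurableSet (S q)) (hT : MeasurableSet T)
    {g : ℝ → ℝ → ℝ} {f : ℝ → ℝ}
    (hg : ∀ q, Sol K xi (S q) (g q)) (hf : Sol K xi T f)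
    {l : Filter ℝ} [l.IsCountablyGenerated]
    (hl : ∀ᵐ x, ∀ᶠ q in l, (x ∈ S q ↔ x ∈ T)) :
    Tendsto (fun q => ∫ x, (S q).indicator (g q) x) l (nhds (∫ x, T.indicator f x)) := by
  have h1 : Tendsto (fun q => ∫ x, |T.indicator f x - (S q).indicator f x|) l
      (nhds (∫ x : ℝ, (0 : ℝ))) := by
    refine tendsto_integral_filter_of_dominated_convergence (fun x => |f x|) ?_ ?_ hf.1.abs ?_
    · exact Eventually.of_forall fun q =>
        ((hf.1.indicator hT).sub (hf.1.indicator (hS q))).abs.aestronglyMeasurable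
    · refine Eventually.of_forall fun q => Eventually.of_forall fun x => ?_
      by_cases hx : x ∈ S q <;> by_cases hx' : x ∈ T <;> simp [hx, hx']
    · filter_upwards [hl] with x hx
      refine tendsto_const_nhds.congr' ?_
      filter_upwards [hx] with q hq
      by_cases hx' : x ∈ T
      · simp [hx', hq.2 hx']
      · simp [hx', mt hq.1 hx']
  have h2 := h1.const_mul (1 - ∫ x, |K x|)⁻¹
  simp only [integral_zero, mul_zero] at h2
  rw [tendsto_iff_dist_tendsto_zero]
  refine squeeze_zero (fun _ => dist_nonneg) (fun q => ?_) h2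
  refine le_trans ?_ (sol_stab hK hKc hB hk (hS q) hT (hg q) hf)
  rw [dist_comm, Real.dist_eq,
    ← integral_sub (hf.1.indicator hT) ((hg q).1.indicator (hS q))]
  exact abs_integral_le_integral_abs

lemma sol_exists {K xi : ℝ → ℝ} (hK : Integrable K) (hKc : Continuous K) {B : ℝ}
    (hB : ∀ x, |K x| ≤ B) (hk : (∫ x, |K x|) < 1) (hxi : Integrable xi)
    {S : Set ℝ} (hS : MeasurableSet S) : ∃ g, Sol K xi S g := by
  have hi : ∀ f : ℝ →₁[volume] ℝ,
      Integrable (fun l => xi l - ∫ m, K (l - m) * S.indicator f m) := fun f =>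
    hxi.sub (conv_facts hK ((L1.integrable_coeFn f).indicator hS)).1
  let F : (ℝ →₁[volume] ℝ) → (ℝ →₁[volume] ℝ) := fun f => (hi f).toL1 _
  have hk0 : 0 ≤ ∫ x, |K x| := integral_nonneg fun x => abs_nonneg _
  have hF : ContractingWith ⟨∫ x, |K x|, hk0⟩ F := by
    refine ⟨by exact_mod_cast hk, LipschitzWith.of_dist_le_mul fun f g => ?_⟩
    have hfi := (L1.integrable_coeFn f).indicator hS
    have hgi := (L1.integrable_coeFn g).indicator hS
    have hd : Integrable (fun x => S.indicator g x - S.indicator f x) := hgi.sub hfi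
    rw [L1.dist_eq_integral_dist, L1.dist_eq_integral_dist]
    have e1 : (∫ x, dist (F f x) (F g x))
        = ∫ l, |∫ m, K (l - m) * (S.indicator g m - S.indicator f m)| := by
      refine integral_congr_ae ?_
      filter_upwards [(hi f).coeFn_toL1, (hi g).coeFn_toL1] with l h1 h2
      simp only [F]
      rw [h1, h2, Real.dist_eq]
      congr 1
      simp only [mul_sub]
      rw [integral_sub (conv_integrand hKc hB hgi l) (conv_integrand hKc hB hfi l)]
      ring
    rw [e1]
    refine (conv_bound hK hd).trans ?_
    refine mul_le_mul_of_nonneg_left ?_ hk0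
    have hfg := ((L1.integrable_coeFn f).sub (L1.integrable_coeFn g)).abs
    refine integral_mono hd.abs hfg fun x => ?_
    by_cases hx : x ∈ S
    · simp only [Set.indicator_of_mem hx]
      rw [abs_sub_comm, Real.dist_eq]
    · simp [hx]
  obtain ⟨f, hf, -⟩ := hF.exists_fixedPoint 0 (edist_ne_top _ _)
  have hae : (fun l => xi l - ∫ m, K (l - m) * S.indicator f m) =ᵐ[volume] f := by
    have h1 := (hi f).coeFn_toL1
    have h2 : (hi f).toL1 _ = f := hf
    rw [h2] at h1
    exact h1.symm
  refine ⟨_, hi f, fun l => ?_⟩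
  have : (∫ m, K (l - m) * S.indicator (fun l => xi l - ∫ m, K (l - m) * S.indicator f m) m)
      = ∫ m, K (l - m) * S.indicator f m := by
    refine integral_congr_ae ?_
    filter_upwards [hae] with m hm
    by_cases hx : m ∈ S
    · simp only [Set.indicator_of_mem hx]; rw [hm]
    · simp [hx]
  rw [this]; ring

/-! ### Concrete kernels -/

lemma ker_pos {s : ℝ} (hs : s ≠ 0) (x : ℝ) : 0 < Real.sinh x ^ 2 + s ^ 2 := by positivity

lemma ker_cont {s : ℝ} (hs : s ≠ 0) : Continuous fun x => (Real.sinh x ^ 2 + s ^ 2)⁻¹ :=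
  ((Real.continuous_sinh.pow 2).add continuous_const).inv₀ fun x => (ker_pos hs x).ne'

lemma sq_le_sinh_sq (x : ℝ) : x ^ 2 ≤ Real.sinh x ^ 2 := by
  rw [sq_le_sq]
  rcases le_total 0 x with h | h
  · rw [abs_of_nonneg h]
    exact (Real.self_le_sinh_iff.2 h).trans (le_abs_self _)
  · rw [abs_of_nonpos h]
    have := Real.self_le_sinh_iff.2 (neg_nonneg.2 h)
    rw [Real.sinh_neg] at this
    exact this.trans (neg_le_abs _)

lemma ker_le {s : ℝ} (hs : s ≠ 0) (x : ℝ) : (Real.sinh x ^ 2 + s ^ 2)⁻¹ ≤ (s ^ 2)⁻¹ :=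
  inv_anti₀ (by positivity) (by nlinarith [sq_nonneg (Real.sinh x)])

lemma ker_int {s : ℝ} (hs : s ≠ 0) (hs1 : s ^ 2 ≤ 1) :
    Integrable fun x => (Real.sinh x ^ 2 + s ^ 2)⁻¹ := by
  refine (integrable_inv_one_add_sq.const_mul (s ^ 2)⁻¹).mono'
    (ker_cont hs).aestronglyMeasurable (Eventually.of_forall fun x => ?_)
  rw [Real.norm_of_nonneg (inv_nonneg.2 (ker_pos hs x).le), ← mul_inv]
  have : 0 < s ^ 2 := by positivity
  refine inv_anti₀ (by positivity) ?_
  nlinarith [sq_le_sinh_sq x, sq_nonneg x]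

lemma tanh_deriv (x : ℝ) : HasDerivAt Real.tanh (1 / Real.cosh x ^ 2) x := by
  have h := (Real.hasDerivAt_sinh x).div (Real.hasDerivAt_cosh x) (Real.cosh_pos x).ne'
  have e : Real.tanh = Real.sinh / Real.cosh := by
    funext y; simp [Real.tanh_eq_sinh_div_cosh]
  rw [e]
  have e2 : Real.cosh x * Real.cosh x - Real.sinh x * Real.sinh x = 1 := by
    nlinarith [Real.cosh_sq x]
  rwa [e2] at h

lemma tanh_top : Tendsto Real.tanh atTop (nhds 1) := by
  have e : Real.tanh = fun x => 1 - 2 * (Real.exp (2 * x) + 1)⁻¹ := by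
    funext x
    have h1 : Real.exp (2 * x) = Real.exp x * Real.exp x := by rw [← Real.exp_add]; ring_nf
    have h2 : Real.exp (-x) = (Real.exp x)⁻¹ := Real.exp_neg x
    have h3 := Real.exp_pos x
    rw [Real.tanh_eq_sinh_div_cosh, Real.sinh_eq, Real.cosh_eq, h1, h2]
    field_simp
    ring
  rw [e]
  have h : Tendsto (fun x : ℝ => Real.exp (2 * x) + 1) atTop atTop :=
    tendsto_atTop_add_const_right _ _
      (Real.tendsto_exp_atTop.comp (tendsto_id.const_mul_atTop (by norm_num)))
  simpa using (h.inv_tendsto_atTop.const_mul 2).const_sub 1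

lemma tanh_bot : Tendsto Real.tanh atBot (nhds (-1)) := by
  have h := (tanh_top.comp tendsto_neg_atBot_atTop).neg
  refine h.congr fun x => ?_
  simp [Real.tanh_neg]

lemma ker_integral {a : ℝ} (h0 : 0 < a) (hπ : a < π) :
    ∫ x, Real.sin (2 * a) * (Real.sinh x ^ 2 + Real.sin a ^ 2)⁻¹ = 2 * (π - 2 * a) := by
  have hs : 0 < Real.sin a := Real.sin_pos_of_pos_of_lt_pi h0 hπ
  set c := Real.cos a / Real.sin a with hc
  have hd : ∀ x, HasDerivAt (fun x => 2 * Real.arctan (c * Real.tanh x))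
      (Real.sin (2 * a) * (Real.sinh x ^ 2 + Real.sin a ^ 2)⁻¹) x := by
    intro x
    have h := (((tanh_deriv x).const_mul c).arctan).const_mul 2
    refine h.congr_deriv ?_
    have hp := ker_pos hs.ne' x
    have hcp := Real.cosh_pos x
    have e : 1 + (c * Real.tanh x) ^ 2
        = (Real.sinh x ^ 2 + Real.sin a ^ 2) / (Real.sin a ^ 2 * Real.cosh x ^ 2) := by
      rw [hc, Real.tanh_eq_sinh_div_cosh]
      field_simp
      have h1 := Real.sin_sq_add_cos_sq a
      have h2 := Real.cosh_sq x
      rw [h2]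
      have h3 : Real.cos a ^ 2 = 1 - Real.sin a ^ 2 := by linarith
      rw [h3]; ring
    rw [e, Real.sin_two_mul, hc]
    field_simp
  have harc : Real.arctan c = π / 2 - a := by
    have : c = Real.tan (π / 2 - a) := by
      rw [Real.tan_pi_div_two_sub, Real.tan_eq_sin_div_cos, inv_div]
    rw [this]
    exact Real.arctan_tan (by linarith) (by linarith)
  have ht : Tendsto (fun x => 2 * Real.arctan (c * Real.tanh x)) atTop
      (nhds (2 * (π / 2 - a))) := by
    rw [← harc]
    have := ((Real.continuous_arctan.tendsto _).comp (tanh_top.const_mul c)).const_mul 2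
    simpa using this
  have hb : Tendsto (fun x => 2 * Real.arctan (c * Real.tanh x)) atBot
      (nhds (-(2 * (π / 2 - a)))) := by
    rw [← harc]
    have := ((Real.continuous_arctan.tendsto _).comp (tanh_bot.const_mul c)).const_mul 2
    simpa [Real.arctan_neg] using this
  rw [integral_of_hasDerivAt_of_tendsto hd
    ((ker_int hs.ne' (Real.sin_sq_le_one a)).const_mul _) hb ht]
  ring

lemma Kml_eq_s14 (ζ : ℝ) : Kml ζ = fun x =>
    (2 * π)⁻¹ * (Real.sin (2 * ζ) * (Real.sinh x ^ 2 + Real.sin ζ ^ 2)⁻¹) := by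
  funext x
  rw [Kml, div_eq_mul_inv, mul_inv]; ring

lemma xiMl_eq_s14 (ζ : ℝ) : xiMl ζ = fun x =>
    (2 * π)⁻¹ * (Real.sin (2 * (ζ / 2)) * (Real.sinh x ^ 2 + Real.sin (ζ / 2) ^ 2)⁻¹) := by
  funext x
  rw [xiMl, div_eq_mul_inv, mul_inv, mul_div_cancel₀ ζ (two_ne_zero)]; ring

lemma kern_facts {a : ℝ} (h0 : 0 < a) (hπ : a < π) {f : ℝ → ℝ}
    (hf : f = fun x => (2 * π)⁻¹ * (Real.sin (2 * a) * (Real.sinh x ^ 2 + Real.sin a ^ 2)⁻¹)) :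
    Integrable f ∧ Continuous f ∧ (∃ B, ∀ x, |f x| ≤ B) ∧ (∫ x, f x) = 1 - 2 * a / π ∧
    (∫ x, |f x|) = |1 - 2 * a / π| := by
  have hs : 0 < Real.sin a := Real.sin_pos_of_pos_of_lt_pi h0 hπ
  have hpi := Real.pi_pos
  have hint : (∫ x, f x) = 1 - 2 * a / π := by
    rw [hf, integral_const_mul, ker_integral h0 hπ]; field_simp
  refine ⟨?_, ?_, ⟨|(2 * π)⁻¹ * Real.sin (2 * a)| * (Real.sin a ^ 2)⁻¹, ?_⟩, hint, ?_⟩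
  · rw [hf]
    exact ((ker_int hs.ne' (Real.sin_sq_le_one a)).const_mul _).const_mul _
  · rw [hf]
    exact continuous_const.mul (continuous_const.mul (ker_cont hs.ne'))
  · intro x
    rw [hf]
    simp only
    rw [← mul_assoc, abs_mul, abs_of_nonneg (inv_nonneg.2 (ker_pos hs.ne' x).le)]
    exact mul_le_mul_of_nonneg_left (ker_le hs.ne' x) (abs_nonneg _)
  · rw [← hint]
    have hk : ∀ x, 0 ≤ (Real.sinh x ^ 2 + Real.sin a ^ 2)⁻¹ :=
      fun x => inv_nonneg.2 (ker_pos hs.ne' x).le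
    have hp2 : 0 ≤ (2 * π)⁻¹ := by positivity
    rcases le_total 0 (Real.sin (2 * a)) with h | h
    · have hn : ∀ x, 0 ≤ f x := fun x => by
        rw [hf]; exact mul_nonneg hp2 (mul_nonneg h (hk x))
      rw [abs_of_nonneg (integral_nonneg hn)]
      simp only [abs_of_nonneg (hn _)]
    · have hn : ∀ x, f x ≤ 0 := fun x => by
        rw [hf]; exact mul_nonpos_of_nonneg_of_nonpos hp2
          (mul_nonpos_of_nonpos_of_nonneg h (hk x))
      rw [abs_of_nonpos (integral_nonpos hn)]
      simp only [abs_of_nonpos (hn _), integral_neg]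

lemma interval_eq {q : ℝ} (hq : 0 ≤ q) (h k : ℝ → ℝ) :
    (∫ m in (-q)..q, k m * h m) = ∫ m, k m * (Set.Ioc (-q) q).indicator h m := by
  rw [intervalIntegral.integral_of_le (by linarith), ← integral_indicator measurableSet_Ioc]
  congr 1
  funext m
  by_cases hm : m ∈ Set.Ioc (-q) q <;> simp only [Set.indicator, hm, if_true, if_false, mul_zero]

/-- **Existence and uniqueness for the continuum Bethe equation, regime
`-1 < Δ < 1`** (Proposition B.1): for every `ζ ∈ (0,π)` and `q ∈ [0,∞)` the
equation `g(λ) + ∫_{-q}^q K(λ-μ)g(μ)dμ = ξ(λ)` has a unique solution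
`g = ρ(·|q)` in `L¹(ℝ) ∩ L^∞(ℝ)`; moreover for every `m ∈ [0,1/2)` there is a
`q ∈ [0,∞)` with `∫_{-q}^{q} ρ(λ|q)dλ = m`. -/
theorem continuum_bethe_massless (ζ : ℝ) (h0 : 0 < ζ) (hπ : ζ < π) :
    (∀ q : ℝ, 0 ≤ q → ∃! g : ℝ → ℝ, IsBEml ζ q g) ∧
    ∀ m : ℝ, 0 ≤ m → m < 1 / 2 →
      ∃ q : ℝ, 0 ≤ q ∧ ∀ g : ℝ → ℝ, IsBEml ζ q g → (∫ t in (-q)..q, g t) = m := by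
  have hpi := Real.pi_pos
  obtain ⟨hK, hKc, ⟨B, hB⟩, hKi, hKa⟩ := kern_facts h0 hπ (Kml_eq_s14 ζ)
  obtain ⟨hX, hXc, ⟨C, hC⟩, hXi, -⟩ :=
    kern_facts (half_pos h0) ((half_lt_self h0).trans hπ) (xiMl_eq_s14 ζ)
  have hr0 : 0 < ζ / π := div_pos h0 hpi
  have hr1 : ζ / π < 1 := (div_lt_one hpi).2 hπ
  have hk : (∫ x, |Kml ζ x|) < 1 := by
    rw [hKa, mul_div_assoc, abs_lt]
    constructor <;> linarith
  have hex : ∀ q : ℝ, ∃ g, Sol (Kml ζ) (xiMl ζ) (Set.Ioc (-q) q) g := fun q =>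
    sol_exists hK hKc hB hk hX measurableSet_Ioc
  have to_sol : ∀ q : ℝ, 0 ≤ q → ∀ g, IsBEml ζ q g →
      Sol (Kml ζ) (xiMl ζ) (Set.Ioc (-q) q) g := by
    intro q hq g hg
    refine ⟨hg.1, fun l => ?_⟩
    rw [← hg.2.2 l, interval_eq hq g (fun m => Kml ζ (l - m))]
  constructor
  · intro q hq
    obtain ⟨g, hg⟩ := hex q
    refine ⟨g, ⟨hg.1, ?_, fun l => ?_⟩, fun f hf =>
      sol_unique hK hKc hB hk measurableSet_Ioc (to_sol q hq f hf) hg⟩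
    · refine memLp_top_of_bound hg.1.aestronglyMeasurable
        (C + ∫ m, B * |(Set.Ioc (-q) q).indicator g m|) (Eventually.of_forall fun l => ?_)
      have h1 := hg.2 l
      have h2 : |∫ m, Kml ζ (l - m) * (Set.Ioc (-q) q).indicator g m|
          ≤ ∫ m, B * |(Set.Ioc (-q) q).indicator g m| := by
        have hi := hg.1.indicator (measurableSet_Ioc (a := -q) (b := q))
        refine abs_integral_le_integral_abs.trans
          (integral_mono (conv_integrand hKc hB hi l).abs (hi.abs.const_mul B) fun m => ?_)
        simp only [abs_mul]
        exact mul_le_mul_of_nonneg_right (hB _) (abs_nonneg _)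
      rw [eq_sub_of_add_eq h1, Real.norm_eq_abs]
      exact (abs_sub _ _).trans (add_le_add (hC l) h2)
    · rw [interval_eq hq g (fun m => Kml ζ (l - m))]
      exact hg.2 l
  · intro m hm0 hm
    choose g hg using hex
    obtain ⟨f, hf⟩ := sol_exists hK hKc hB hk hX MeasurableSet.univ
    have hfm : (∫ x, Set.univ.indicator f x) = 1 / 2 := by
      simp only [Set.indicator_univ]
      have h1 := conv_facts hK hf.1
      have h2 : (∫ l, (f l + ∫ m, Kml ζ (l - m) * f m)) = ∫ l, xiMl ζ l := by
        refine integral_congr_ae (Eventually.of_forall fun l => ?_)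
        simpa using hf.2 l
      rw [integral_add hf.1 h1.1, h1.2, hKi, hXi] at h2
      have e1 : 2 * (ζ / 2) / π = ζ / π := by ring
      rw [e1, mul_div_assoc] at h2
      have h3 : (1 - ζ / π) * ((∫ x, f x) - 1 / 2) = 0 := by linarith
      rcases mul_eq_zero.1 h3 with h | h <;> linarith
    let M : ℝ → ℝ := fun q => ∫ x, (Set.Ioc (-q) q).indicator (g q) x
    have hlim : Tendsto M atTop (nhds (1 / 2)) := by
      rw [← hfm]
      refine sol_tendsto hK hKc hB hk (fun q => measurableSet_Ioc) MeasurableSet.univ hg hf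
        (Eventually.of_forall fun x => ?_)
      filter_upwards [eventually_gt_atTop |x|] with q hq
      have := abs_lt.1 hq
      simp [this.1, this.2.le]
    have hcont : Continuous M := by
      rw [continuous_iff_continuousAt]
      intro r
      refine sol_tendsto hK hKc hB hk (fun q => measurableSet_Ioc) measurableSet_Ioc hg (hg r) ?_
      have n1 : ∀ᵐ x : ℝ, x ≠ r := Measure.ae_ne volume r
      have n2 : ∀ᵐ x : ℝ, x ≠ -r := Measure.ae_ne volume (-r)
      filter_upwards [n1, n2] with x hx1 hx2
      have a1 : ∀ᶠ q in nhds r, (x ≤ q ↔ x ≤ r) := by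
        rcases lt_or_gt_of_ne hx1 with h | h
        · filter_upwards [eventually_gt_nhds h] with q hq
          exact ⟨fun _ => h.le, fun _ => hq.le⟩
        · filter_upwards [eventually_lt_nhds h] with q hq
          exact ⟨fun h' => absurd h' (not_le.2 hq), fun h' => absurd h' (not_le.2 h)⟩
      have a2 : ∀ᶠ q in nhds r, (-q < x ↔ -r < x) := by
        rcases lt_or_gt_of_ne hx2 with h | h
        · have h' : r < -x := by linarith
          filter_upwards [eventually_lt_nhds h'] with q hq
          constructor <;> intro <;> linarith
        · have h' : -x < r := by linarith
          filter_upwards [eventually_gt_nhds h'] with q hq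
          constructor <;> intro <;> linarith
      filter_upwards [a1, a2] with q h1 h2
      simp only [Set.mem_Ioc, h1, h2]
    have hM0 : M 0 = 0 := by simp [M]
    obtain ⟨Q, hQm, hQ0⟩ := ((hlim.eventually_const_lt hm).and (eventually_ge_atTop 0)).exists
    obtain ⟨q, hq, hqm⟩ := intermediate_value_Icc hQ0 hcont.continuousOn
      (show m ∈ Set.Icc (M 0) (M Q) from ⟨by rw [hM0]; exact hm0, hQm.le⟩)
    refine ⟨q, hq.1, fun f' hf' => ?_⟩
    have := sol_unique hK hKc hB hk measurableSet_Ioc (to_sol q hq.1 f' hf') (hg q)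
    rw [this, ← hqm]
    have h := interval_eq hq.1 (g q) (fun _ => 1)
    simpa [M] using h

end BetheSix
end
end
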